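/- Let (Ω, 𝒜, μ) be a σ-finite measure space with L¹(μ) separable, let T be a positive Dunford–Schwartz operator (extended complex-linearly to complex-valued functions), and let (β_k)_{k≥0} be a bounded Besicovitch sequence. Then for every f ∈ R_μ the weighted averages B_n(f) = (1/n) ∑_{k=0}^{n−1} β_k T^k f converge almost uniformly to some f̂ ∈ R_μ. -/

import Mathlib

open MeasureTheory Filter Set ENNReal Topology

variable {Ω : Type*} [MeasurableSpace Ω]

/-- `f` belongs to `L¹(μ) + L^∞(μ)` (real case). -/
def MemL1pLinf (μ : Measure Ω) (f : Ω →ₘ[μ] ℝ) : Prop :=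
  ∃ g h : Ω →ₘ[μ] ℝ, eLpNorm g 1 μ ≠ ∞ ∧ eLpNorm h ⊤ μ ≠ ∞ ∧ f = g + h

/-- A positive Dunford–Schwartz operator (real case). -/
structure IsPosDS (μ : Measure Ω) (T : (Ω →ₘ[μ] ℝ) → (Ω →ₘ[μ] ℝ)) : Prop where
  map_add : ∀ f g, MemL1pLinf μ f → MemL1pLinf μ g → T (f + g) = T f + T g
  map_smul : ∀ (c : ℝ) (f), MemL1pLinf μ f → T (c • f) = c • T f
  map_pos : ∀ f, MemL1pLinf μ f → 0 ≤ f → 0 ≤ T f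
  norm_one : ∀ f, MemL1pLinf μ f → eLpNorm (T f) 1 μ ≤ eLpNorm f 1 μ
  norm_top : ∀ f, MemL1pLinf μ f → eLpNorm (T f) ⊤ μ ≤ eLpNorm f ⊤ μ

/-- The complexification `ω ↦ (g ω : ℂ)` of a real-valued class `g`. -/
noncomputable def ofRealAE (μ : Measure Ω) (g : Ω →ₘ[μ] ℝ) : Ω →ₘ[μ] ℂ :=
  g.comp (fun t : ℝ => (t : ℂ)) Complex.continuous_ofReal

/-- `f` belongs to `L¹(μ) + L^∞(μ)` (complex case). -/
def MemL1pLinfC (μ : Measure Ω) (f : Ω →ₘ[μ] ℂ) : Prop :=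
  ∃ g h : Ω →ₘ[μ] ℂ, eLpNorm g 1 μ ≠ ∞ ∧ eLpNorm h ⊤ μ ≠ ∞ ∧ f = g + h

/-- `R_μ` (complex case): elements of `L¹+L^∞` with finite distribution tails. -/
def MemRmuC (μ : Measure Ω) (f : Ω →ₘ[μ] ℂ) : Prop :=
  MemL1pLinfC μ f ∧ ∀ lam : ℝ, 0 < lam → μ {ω | lam < ‖f ω‖} < ∞

/-- Almost uniform convergence of a net `F` to `f` (complex case). -/
def AuTendstoC {ι : Type*} (μ : Measure Ω) (l : Filter ι) (F : ι → Ω →ₘ[μ] ℂ)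
    (f : Ω →ₘ[μ] ℂ) : Prop :=
  ∀ ε : ℝ, 0 < ε → ∃ E : Set Ω, MeasurableSet E ∧ μ Eᶜ ≤ ENNReal.ofReal ε ∧
    Tendsto (fun i => eLpNorm (E.indicator (⇑(F i - f))) ⊤ μ) l (𝓝 0)

/-- A bounded Besicovitch sequence. -/
def IsBesicovitch (β : ℕ → ℂ) : Prop :=
  (∃ C : ℝ, ∀ k, ‖β k‖ ≤ C) ∧
  ∀ ε : ℝ, 0 < ε → ∃ (s : ℕ) (z : Fin s → ℂ) (lam : Fin s → ℂ),
    (∀ j, ‖lam j‖ = 1) ∧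
    Filter.limsup
      (fun n : ℕ => (n : ℝ)⁻¹ * ∑ k ∈ Finset.range n, ‖β k - ∑ j, z j * lam j ^ k‖)
      atTop < ε

/-- The weighted averages `B_n(f) = (1/n) ∑_{k<n} β_k T^k f`. -/
noncomputable def besicovitchAvg (μ : Measure Ω) (T : (Ω →ₘ[μ] ℂ) → (Ω →ₘ[μ] ℂ))
    (β : ℕ → ℂ) (n : ℕ) (f : Ω →ₘ[μ] ℂ) : Ω →ₘ[μ] ℂ :=
  (n : ℂ)⁻¹ • ∑ k ∈ Finset.range n, β k • T^[k] f

/-!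
A weighted average of `T^k f` is dominated by the Cesàro average of `S^k |f|`, so Hopf's maximal
inequality for `S` gives weak type estimates `(1, 1)` and, from `|f| ≤ a⁻¹ |f|² + a`, `(2, 2)`.
On `L²(μ)` every `c T` with `|c| ≤ 1` is a contraction, so von Neumann's theorem
and the Banach principle show that its Cesàro averages are almost uniformly Cauchy. By linearity
this settles trigonometric polynomial weights, and replacing `β` by such a polynomial changes the
averages of a bounded `f ∈ L²(μ)` uniformly little for large `n`. An element of `R_μ` is within a
small constant of an integrable function, hence within a small constant plus a function of small
`L¹` norm of a bounded `L²` function, and the maximal inequality transfers the Cauchy property.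
Finally, for `|f| ≤ w + a` with `w` integrable, the functions `(|B_n f| - C a)⁺` are bounded in
`L¹(μ)`, and Fatou's lemma places the limit in `R_μ`.
-/

variable {μ : Measure Ω}

section L1AddLinf

variable {𝕜 E F : Type*} [NormedField 𝕜] [NormedAddCommGroup E] [NormedSpace 𝕜 E]
  [NormedAddCommGroup F]

/-- The space `L¹(μ) + L^∞(μ)` of `E`-valued classes. -/
def L1AddLinf (𝕜 E : Type*) [NormedField 𝕜] [NormedAddCommGroup E] [NormedSpace 𝕜 E]
    (μ : Measure Ω) : Submodule 𝕜 (Ω →ₘ[μ] E) :=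
  Lp.LpSubmodule 𝕜 E 1 μ ⊔ Lp.LpSubmodule 𝕜 E ∞ μ

theorem mem_L1AddLinf_iff {f : Ω →ₘ[μ] E} :
    f ∈ L1AddLinf 𝕜 E μ ↔
      ∃ g h : Ω →ₘ[μ] E, eLpNorm g 1 μ ≠ ∞ ∧ eLpNorm h ∞ μ ≠ ∞ ∧ f = g + h := by
  simp only [L1AddLinf, Submodule.mem_sup, ← lt_top_iff_ne_top, eq_comm (a := f)]
  exact ⟨fun ⟨g, hg, h, hh, hf⟩ => ⟨g, h, hg, hh, hf⟩, fun ⟨g, h, hg, hh, hf⟩ => ⟨g, hg, h, hh, hf⟩⟩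

theorem memL1pLinf_iff {f : Ω →ₘ[μ] ℝ} : MemL1pLinf μ f ↔ f ∈ L1AddLinf ℝ ℝ μ :=
  mem_L1AddLinf_iff.symm

theorem memL1pLinfC_iff {f : Ω →ₘ[μ] ℂ} : MemL1pLinfC μ f ↔ f ∈ L1AddLinf ℂ ℂ μ :=
  mem_L1AddLinf_iff.symm

/-- The class of `ω ↦ ‖f ω‖`. -/
noncomputable def normAE (f : Ω →ₘ[μ] E) : Ω →ₘ[μ] ℝ :=
  f.comp norm continuous_norm

theorem coeFn_normAE (f : Ω →ₘ[μ] E) : normAE f =ᵐ[μ] fun x => ‖f x‖ :=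
  AEEqFun.coeFn_comp _ _ _

theorem normAE_nonneg (f : Ω →ₘ[μ] E) : 0 ≤ᵐ[μ] normAE f := by
  filter_upwards [coeFn_normAE f] with x hx
  simp [hx]

theorem eLpNorm_normAE (f : Ω →ₘ[μ] E) (p : ℝ≥0∞) :
    eLpNorm (normAE f) p μ = eLpNorm f p μ := by
  rw [eLpNorm_congr_ae (coeFn_normAE f), eLpNorm_norm]

theorem memLp_normAE_iff {f : Ω →ₘ[μ] E} {p : ℝ≥0∞} : MemLp (normAE f) p μ ↔ MemLp f p μ := by
  simp only [MemLp, eLpNorm_normAE, AEEqFun.aestronglyMeasurable]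

theorem exists_integrable_norm_le {f : Ω →ₘ[μ] E} (hf : f ∈ L1AddLinf 𝕜 E μ) :
    ∃ (w : Ω →ₘ[μ] ℝ) (a : ℝ), MemLp w 1 μ ∧ 0 ≤ a ∧ 0 ≤ᵐ[μ] w ∧ ∀ᵐ x ∂μ, ‖f x‖ ≤ w x + a := by
  obtain ⟨g, h, hg, hh, rfl⟩ := mem_L1AddLinf_iff.1 hf
  refine ⟨normAE g, (eLpNorm h ∞ μ).toReal,
    memLp_normAE_iff.2 ⟨g.aestronglyMeasurable, hg.lt_top⟩, toReal_nonneg, normAE_nonneg g, ?_⟩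
  have hh' : ∀ᵐ x ∂μ, ‖h x‖ₑ ≤ eLpNorm h ∞ μ := by
    rw [eLpNorm_exponent_top]
    exact enorm_ae_le_eLpNormEssSup _ _
  filter_upwards [AEEqFun.coeFn_add g h, coeFn_normAE g, hh'] with x hadd hnorm hx
  rw [hadd, Pi.add_apply, hnorm]
  refine (norm_add_le _ _).trans (add_le_add_right ?_ _)
  exact toReal_enorm (h x) ▸ ENNReal.toReal_mono hh hx

theorem mem_L1AddLinf_of_norm_le {f : Ω →ₘ[μ] E} {w : Ω → ℝ} {a : ℝ} (hw : Integrable w μ)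
    (hf : ∀ᵐ x ∂μ, ‖f x‖ ≤ w x + a) : f ∈ L1AddLinf 𝕜 E μ := by
  set s := {x | 2 * |a| < ‖f x‖}
  have hs : MeasurableSet s :=
    measurableSet_lt measurable_const f.stronglyMeasurable.norm.measurable
  have hf1 : MemLp (s.indicator f) 1 μ := by
    refine memLp_one_iff_integrable.2 <|
      (hw.norm.const_mul 2).mono' (f.aestronglyMeasurable.indicator hs) ?_
    filter_upwards [hf] with x hx
    by_cases hxs : x ∈ s
    · have : 2 * |a| < ‖f x‖ := hxs
      rw [indicator_of_mem hxs, Real.norm_eq_abs]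
      linarith [le_abs_self a, le_abs_self (w x)]
    · simp [hxs]
  have hf2 : MemLp (sᶜ.indicator f) ∞ μ := by
    refine memLp_top_of_bound (f.aestronglyMeasurable.indicator hs.compl) (2 * |a|) ?_
    filter_upwards with x
    by_cases hxs : x ∈ s
    · simp [hxs]
    · simpa [hxs] using not_lt.1 hxs
  refine mem_L1AddLinf_iff.2 ⟨AEEqFun.mk _ hf1.1, AEEqFun.mk _ hf2.1, ?_, ?_, ?_⟩
  · rw [eLpNorm_congr_ae (AEEqFun.coeFn_mk _ _)]; exact hf1.2.ne
  · rw [eLpNorm_congr_ae (AEEqFun.coeFn_mk _ _)]; exact hf2.2.ne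
  · rw [AEEqFun.mk_add_mk]
    simp only [indicator_self_add_compl, AEEqFun.mk_coeFn]

theorem mem_L1AddLinf_of_norm_le_norm {𝕜' : Type*} [NormedField 𝕜'] [NormedSpace 𝕜' F]
    {f : Ω →ₘ[μ] F} {g : Ω →ₘ[μ] E} (hg : g ∈ L1AddLinf 𝕜 E μ)
    (hfg : ∀ᵐ x ∂μ, ‖f x‖ ≤ ‖g x‖) : f ∈ L1AddLinf 𝕜' F μ := by
  obtain ⟨w, a, hw, -, -, hgw⟩ := exists_integrable_norm_le hg
  refine mem_L1AddLinf_of_norm_le (a := a) (memLp_one_iff_integrable.1 hw) ?_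
  filter_upwards [hfg, hgw] with x h₁ h₂ using h₁.trans h₂

theorem normAE_mem_L1AddLinf {f : Ω →ₘ[μ] E} (hf : f ∈ L1AddLinf 𝕜 E μ) :
    normAE f ∈ L1AddLinf ℝ ℝ μ :=
  mem_L1AddLinf_of_norm_le_norm hf <| by
    filter_upwards [coeFn_normAE f] with x hx
    simp [hx]

theorem const_mem_L1AddLinf (c : E) : (AEEqFun.const Ω c : Ω →ₘ[μ] E) ∈ L1AddLinf 𝕜 E μ := by
  refine mem_L1AddLinf_of_norm_le (integrable_zero Ω ℝ μ) (a := ‖c‖) ?_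
  filter_upwards [AEEqFun.coeFn_const Ω (μ := μ) c] with x hx
  simp [hx]

theorem mem_L1AddLinf_of_memLp {p : ℝ≥0∞} (hp : 1 ≤ p) {f : Ω →ₘ[μ] E} (hf : MemLp f p μ) :
    f ∈ L1AddLinf 𝕜 E μ := by
  obtain rfl | hp' := eq_or_ne p ∞
  · exact Submodule.mem_sup_right hf.2
  refine mem_L1AddLinf_of_norm_le (a := 1)
    (hf.integrable_norm_rpow (zero_lt_one.trans_le hp).ne' hp') ?_
  filter_upwards with x
  obtain hx | hx := le_total ‖f x‖ 1
  · exact hx.trans (le_add_of_nonneg_left (by positivity))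
  · have : 1 ≤ p.toReal := by simpa using ENNReal.toReal_mono hp' hp
    linarith [Real.self_le_rpow_of_one_le hx this]

end L1AddLinf

section NormSq

variable {E : Type*} [NormedAddCommGroup E] {f : Ω →ₘ[μ] E}

theorem coeFn_normAE_sq (f : Ω →ₘ[μ] E) :
    (normAE f ^ 2 : Ω →ₘ[μ] ℝ) =ᵐ[μ] fun x => ‖f x‖ ^ 2 := by
  filter_upwards [AEEqFun.coeFn_pow (normAE f) 2, coeFn_normAE f] with x hpow hx
  rw [hpow, Pi.pow_apply, hx]

theorem eLpNorm_normAE_sq (f : Ω →ₘ[μ] E) :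
    eLpNorm (normAE f ^ 2 : Ω →ₘ[μ] ℝ) 1 μ = eLpNorm f 2 μ ^ 2 := by
  have h := eLpNorm_norm_rpow (p := 1) (μ := μ) f two_pos
  simp only [Real.rpow_two, one_mul] at h
  rw [eLpNorm_congr_ae (coeFn_normAE_sq f), h]
  norm_num

theorem memLp_one_normAE_sq (hf : MemLp f 2 μ) : MemLp (normAE f ^ 2 : Ω →ₘ[μ] ℝ) 1 μ :=
  ⟨AEEqFun.aestronglyMeasurable _, eLpNorm_normAE_sq f ▸ ENNReal.pow_lt_top hf.2⟩

end NormSq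

namespace IsPosDS

variable {S : (Ω →ₘ[μ] ℝ) → (Ω →ₘ[μ] ℝ)} {g h w : Ω →ₘ[μ] ℝ} {a : ℝ}

theorem map_mem (hS : IsPosDS μ S) (hg : g ∈ L1AddLinf ℝ ℝ μ) : S g ∈ L1AddLinf ℝ ℝ μ := by
  obtain ⟨u, v, hu, hv, rfl⟩ := memL1pLinf_iff.2 hg
  have hu' : MemL1pLinf μ u := memL1pLinf_iff.2 (Submodule.mem_sup_left hu.lt_top)
  have hv' : MemL1pLinf μ v := memL1pLinf_iff.2 (Submodule.mem_sup_right hv.lt_top)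
  exact mem_L1AddLinf_iff.2 ⟨S u, S v, ((hS.norm_one u hu').trans_lt hu.lt_top).ne,
    ((hS.norm_top v hv').trans_lt hv.lt_top).ne, hS.map_add u v hu' hv'⟩

theorem map_neg (hS : IsPosDS μ S) (hg : g ∈ L1AddLinf ℝ ℝ μ) : S (-g) = -S g := by
  simpa using hS.map_smul (-1) g (memL1pLinf_iff.2 hg)

theorem map_sub (hS : IsPosDS μ S) (hg : g ∈ L1AddLinf ℝ ℝ μ) (hh : h ∈ L1AddLinf ℝ ℝ μ) :
    S (g - h) = S g - S h := by
  rw [sub_eq_add_neg, hS.map_add g (-h) (memL1pLinf_iff.2 hg) (memL1pLinf_iff.2 (neg_mem hh)),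
    hS.map_neg hh, sub_eq_add_neg]

theorem map_nonneg (hS : IsPosDS μ S) (hg : g ∈ L1AddLinf ℝ ℝ μ) (h0 : 0 ≤ᵐ[μ] g) :
    0 ≤ᵐ[μ] S g := by
  have h0' : (0 : Ω →ₘ[μ] ℝ) ≤ g := AEEqFun.coeFn_le.1 (AEEqFun.coeFn_zero.trans_le h0)
  exact AEEqFun.coeFn_zero.symm.trans_le
    (AEEqFun.coeFn_le.2 (hS.map_pos g (memL1pLinf_iff.2 hg) h0'))

theorem map_mono (hS : IsPosDS μ S) (hg : g ∈ L1AddLinf ℝ ℝ μ) (hh : h ∈ L1AddLinf ℝ ℝ μ)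
    (hgh : g ≤ᵐ[μ] h) : S g ≤ᵐ[μ] S h := by
  have hsub : 0 ≤ᵐ[μ] (h - g : Ω →ₘ[μ] ℝ) := by
    filter_upwards [AEEqFun.coeFn_sub h g, hgh] with x h₁ h₂
    simpa [h₁] using h₂
  filter_upwards [hS.map_nonneg (sub_mem hh hg) hsub, AEEqFun.coeFn_sub (S h) (S g)] with x h₁ h₂
  simpa [hS.map_sub hh hg, h₂] using h₁

theorem abs_map_le (hS : IsPosDS μ S) (ha : 0 ≤ a) (hg : ∀ᵐ x ∂μ, |g x| ≤ a) :
    ∀ᵐ x ∂μ, |S g x| ≤ a := by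
  have hga : eLpNorm g ∞ μ ≤ ENNReal.ofReal a := by
    rw [eLpNorm_exponent_top]
    exact eLpNormEssSup_le_of_ae_bound hg
  have hmem : MemL1pLinf μ g := memL1pLinf_iff.2
    (Submodule.mem_sup_right (hga.trans_lt ofReal_lt_top))
  filter_upwards [enorm_ae_le_eLpNormEssSup (S g) μ] with x hx
  rw [← eLpNorm_exponent_top] at hx
  have := ENNReal.toReal_mono ofReal_ne_top (hx.trans ((hS.norm_top g hmem).trans hga))
  rwa [toReal_enorm, Real.norm_eq_abs, toReal_ofReal ha] at this

theorem map_le_add_const (hS : IsPosDS μ S) (hg : g ∈ L1AddLinf ℝ ℝ μ)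
    (hw : w ∈ L1AddLinf ℝ ℝ μ) (ha : 0 ≤ a) (h : ∀ᵐ x ∂μ, g x ≤ w x + a) :
    ∀ᵐ x ∂μ, S g x ≤ S w x + a := by
  have hca : (AEEqFun.const Ω a : Ω →ₘ[μ] ℝ) =ᵐ[μ] fun _ => a := AEEqFun.coeFn_const Ω a
  have hc : (AEEqFun.const Ω a : Ω →ₘ[μ] ℝ) ∈ L1AddLinf ℝ ℝ μ := const_mem_L1AddLinf a
  have hmono : S g ≤ᵐ[μ] S (w + AEEqFun.const Ω a) := by
    refine hS.map_mono hg (add_mem hw hc) ?_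
    filter_upwards [h, AEEqFun.coeFn_add w (AEEqFun.const Ω a), hca] with x hx hadd hx'
    simpa [hadd, hx'] using hx
  have hbound : ∀ᵐ x ∂μ, |S (AEEqFun.const Ω a) x| ≤ a := by
    refine hS.abs_map_le ha ?_
    filter_upwards [hca] with x hx
    simp [hx, abs_of_nonneg ha]
  rw [hS.map_add _ _ (memL1pLinf_iff.2 hw) (memL1pLinf_iff.2 hc)] at hmono
  filter_upwards [hmono, hbound, AEEqFun.coeFn_add (S w) (S (AEEqFun.const Ω a))] with x h₁ h₂ h₃
  rw [h₃, Pi.add_apply] at h₁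
  linarith [le_abs_self (S (AEEqFun.const Ω a) x)]

theorem memLp_one_map (hS : IsPosDS μ S) (hg : MemLp g 1 μ) : MemLp (S g) 1 μ :=
  ⟨(S g).aestronglyMeasurable, (hS.norm_one g (memL1pLinf_iff.2
    (mem_L1AddLinf_of_memLp le_rfl hg))).trans_lt hg.2⟩

theorem iterate (hS : IsPosDS μ S) (k : ℕ) : IsPosDS μ S^[k] := by
  have hmem {g} (hg : MemL1pLinf μ g) : MemL1pLinf μ (S g) :=
    memL1pLinf_iff.2 (hS.map_mem (memL1pLinf_iff.1 hg))
  induction k with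
  | zero => exact ⟨by simp, by simp, fun _ _ h => h, fun _ _ => le_rfl, fun _ _ => le_rfl⟩
  | succ k ih =>
    refine ⟨fun f g hf hg => ?_, fun c f hf => ?_, fun f hf h0 => ?_, fun f hf => ?_,
      fun f hf => ?_⟩ <;> simp only [Function.iterate_succ_apply]
    · rw [hS.map_add f g hf hg, ih.map_add _ _ (hmem hf) (hmem hg)]
    · rw [hS.map_smul c f hf, ih.map_smul c _ (hmem hf)]
    · exact ih.map_pos _ (hmem hf) (hS.map_pos f hf h0)
    · exact (ih.norm_one _ (hmem hf)).trans (hS.norm_one f hf)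
    · exact (ih.norm_top _ (hmem hf)).trans (hS.norm_top f hf)

-- The tangent lines `2 q t - q ^ 2 ≤ t ^ 2` with `q` rational recover `t ^ 2` as their supremum.
theorem sq_map_le (hS : IsPosDS μ S) (hg : MemLp g 2 μ) :
    ∀ᵐ x ∂μ, (S g x) ^ 2 ≤ S (normAE g ^ 2) x := by
  have hgL : g ∈ L1AddLinf ℝ ℝ μ := mem_L1AddLinf_of_memLp one_le_two hg
  have hsqL : normAE g ^ 2 ∈ L1AddLinf ℝ ℝ μ :=
    mem_L1AddLinf_of_memLp le_rfl (memLp_one_normAE_sq hg)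
  have htangent : ∀ q : ℚ, ∀ᵐ x ∂μ, 2 * q * S g x ≤ S (normAE g ^ 2) x + (q : ℝ) ^ 2 := by
    intro q
    have := hS.map_le_add_const (a := (q : ℝ) ^ 2)
      (Submodule.smul_mem _ (2 * q : ℝ) hgL) hsqL (sq_nonneg _) (by
        filter_upwards [coeFn_normAE_sq g, AEEqFun.coeFn_smul (2 * q : ℝ) g] with x hx hsmul
        rw [hsmul, Pi.smul_apply, smul_eq_mul, hx, Real.norm_eq_abs, sq_abs]
        linarith [sq_nonneg (g x - q)])
    rw [hS.map_smul _ _ (memL1pLinf_iff.2 hgL)] at this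
    filter_upwards [this, AEEqFun.coeFn_smul (2 * q : ℝ) (S g)] with x hx hsmul
    simpa [hsmul] using hx
  filter_upwards [ae_all_iff.2 htangent] with x hx
  have hreal : ∀ t : ℝ, 2 * t * S g x ≤ S (normAE g ^ 2) x + t ^ 2 := fun t =>
    Rat.isDenseEmbedding_coe_real.dense.induction (by rintro _ ⟨q, rfl⟩; exact hx q)
      (isClosed_le (by fun_prop) (by fun_prop)) t
  linarith [hreal (S g x)]

theorem eLpNorm_two_map_le (hS : IsPosDS μ S) (hg : MemLp g 2 μ) :
    eLpNorm (S g) 2 μ ≤ eLpNorm g 2 μ := by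
  rw [← ENNReal.pow_le_pow_left_iff two_ne_zero, ← eLpNorm_normAE_sq, ← eLpNorm_normAE_sq]
  refine (eLpNorm_mono_ae ?_).trans <| hS.norm_one _ <| memL1pLinf_iff.2 <|
    mem_L1AddLinf_of_memLp le_rfl (memLp_one_normAE_sq hg)
  filter_upwards [hS.sq_map_le hg, coeFn_normAE_sq (S g)] with x hjensen hx
  rw [hx, norm_pow, norm_norm, Real.norm_eq_abs, sq_abs]
  exact hjensen.trans (le_abs_self _)

theorem map_sum {ι : Type*} (hS : IsPosDS μ S) (s : Finset ι) {g : ι → Ω →ₘ[μ] ℝ}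
    (hg : ∀ i, g i ∈ L1AddLinf ℝ ℝ μ) : S (∑ i ∈ s, g i) = ∑ i ∈ s, S (g i) := by
  induction s using Finset.cons_induction with
  | empty => simpa using hS.map_smul 0 0 (memL1pLinf_iff.2 (zero_mem _))
  | cons i s hi ih =>
    rw [Finset.sum_cons, Finset.sum_cons, ← ih, hS.map_add _ _ (memL1pLinf_iff.2 (hg i))
      (memL1pLinf_iff.2 (sum_mem fun j _ => hg j))]

end IsPosDS

section HopfMax

variable {S : (Ω →ₘ[μ] ℝ) → (Ω →ₘ[μ] ℝ)} {w : Ω →ₘ[μ] ℝ} {l : ℝ}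

/-- Garsia's truncated maxima for the maximal ergodic lemma. If `S` is composition with a map, then
`hopfMax S w l n = max_{m ≤ n} (∑_{k < m} S^k w - m * l)`; for general `S` it is larger. -/
noncomputable def hopfMax (S : (Ω →ₘ[μ] ℝ) → (Ω →ₘ[μ] ℝ)) (w : Ω →ₘ[μ] ℝ) (l : ℝ) :
    ℕ → Ω →ₘ[μ] ℝ
  | 0 => 0
  | n + 1 => (w - AEEqFun.const Ω l + S (hopfMax S w l n)) ⊔ 0

theorem coeFn_hopfMax_succ (S : (Ω →ₘ[μ] ℝ) → (Ω →ₘ[μ] ℝ)) (w : Ω →ₘ[μ] ℝ) (l : ℝ) (n : ℕ) :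
    hopfMax S w l (n + 1) =ᵐ[μ] fun x => max (w x - l + S (hopfMax S w l n) x) 0 := by
  filter_upwards [AEEqFun.coeFn_sup (w - AEEqFun.const Ω l + S (hopfMax S w l n)) 0,
    AEEqFun.coeFn_add (w - AEEqFun.const Ω l) (S (hopfMax S w l n)),
    AEEqFun.coeFn_sub w (AEEqFun.const Ω l), AEEqFun.coeFn_const Ω (μ := μ) l,
    AEEqFun.coeFn_zero (α := Ω) (μ := μ) (β := ℝ)] with x h₁ h₂ h₃ h₄ h₅
  rw [hopfMax, h₁, h₂, Pi.add_apply, h₃, Pi.sub_apply, h₄, h₅]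
  rfl

theorem hopfMax_nonneg (S : (Ω →ₘ[μ] ℝ) → (Ω →ₘ[μ] ℝ)) (w : Ω →ₘ[μ] ℝ) (l : ℝ) :
    ∀ n, 0 ≤ᵐ[μ] hopfMax S w l n
  | 0 => AEEqFun.coeFn_zero.symm.le
  | n + 1 => by
    filter_upwards [coeFn_hopfMax_succ S w l n] with x hx
    simp [hx]

theorem memLp_hopfMax (hS : IsPosDS μ S) (hw : MemLp w 1 μ) (hl : 0 ≤ l) (n : ℕ) :
    MemLp (hopfMax S w l n) 1 μ := by
  induction n with
  | zero => exact MemLp.zero.ae_eq AEEqFun.coeFn_zero.symm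
  | succ n ih =>
    refine (hw.norm.add (hS.memLp_one_map ih).norm).mono (AEEqFun.aestronglyMeasurable _) ?_
    filter_upwards [coeFn_hopfMax_succ S w l n] with x hx
    have := le_abs_self (w x)
    have := le_abs_self (S (hopfMax S w l n) x)
    have := abs_nonneg (w x)
    have := abs_nonneg (S (hopfMax S w l n) x)
    simp only [hx, Pi.add_apply, Real.norm_eq_abs]
    rw [abs_of_nonneg (le_max_right _ _), abs_of_nonneg (by positivity)]
    exact max_le (by linarith) (by positivity)

theorem hopfMax_mem_L1AddLinf (hS : IsPosDS μ S) (hw : MemLp w 1 μ) (hl : 0 ≤ l) (n : ℕ) :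
    hopfMax S w l n ∈ L1AddLinf ℝ ℝ μ :=
  mem_L1AddLinf_of_memLp le_rfl (memLp_hopfMax hS hw hl n)

theorem hopfMax_le_succ (hS : IsPosDS μ S) (hw : MemLp w 1 μ) (hl : 0 ≤ l) (n : ℕ) :
    hopfMax S w l n ≤ᵐ[μ] hopfMax S w l (n + 1) := by
  induction n with
  | zero => exact AEEqFun.coeFn_zero.trans_le (hopfMax_nonneg S w l 1)
  | succ n ih =>
    filter_upwards [coeFn_hopfMax_succ S w l n, coeFn_hopfMax_succ S w l (n + 1),
      hS.map_mono (hopfMax_mem_L1AddLinf hS hw hl n) (hopfMax_mem_L1AddLinf hS hw hl (n + 1)) ih]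
      with x h₁ h₂ h₃
    rw [h₁, h₂]
    gcongr

theorem hopfMax_mono (hS : IsPosDS μ S) (hw : MemLp w 1 μ) (hl : 0 ≤ l) {m n : ℕ} (hmn : m ≤ n) :
    hopfMax S w l m ≤ᵐ[μ] hopfMax S w l n :=
  Nat.le_induction EventuallyLE.rfl (fun n _ ih => ih.trans (hopfMax_le_succ hS hw hl n)) n hmn

theorem sum_iterate_le_hopfMax_add (hS : IsPosDS μ S) (hw : MemLp w 1 μ) (hl : 0 ≤ l) (n : ℕ) :
    ∀ᵐ x ∂μ, (∑ k ∈ Finset.range n, S^[k] w) x ≤ hopfMax S w l n x + l * n := by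
  have hiter (k : ℕ) : S^[k] w ∈ L1AddLinf ℝ ℝ μ :=
    (hS.iterate k).map_mem (mem_L1AddLinf_of_memLp le_rfl hw)
  induction n with
  | zero => simp [hopfMax]
  | succ n ih =>
    have hsum : ∑ k ∈ Finset.range (n + 1), S^[k] w
        = S (∑ k ∈ Finset.range n, S^[k] w) + w := by
      rw [Finset.sum_range_succ', hS.map_sum _ hiter]
      simp only [Function.iterate_succ_apply', Function.iterate_zero_apply]
    rw [hsum]
    filter_upwards [AEEqFun.coeFn_add (S (∑ k ∈ Finset.range n, S^[k] w)) w,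
      hS.map_le_add_const (sum_mem fun k _ => hiter k) (hopfMax_mem_L1AddLinf hS hw hl n)
        (by positivity) ih,
      coeFn_hopfMax_succ S w l n] with x hadd hle hx
    rw [hadd, hx, Pi.add_apply]
    push_cast
    linarith [le_max_left (w x - l + S (hopfMax S w l n) x) 0]

theorem ofReal_mul_measure_hopfMax_succ_pos_le (hS : IsPosDS μ S) (hw : MemLp w 1 μ) (hl : 0 ≤ l)
    (n : ℕ) : ENNReal.ofReal l * μ {x | 0 < hopfMax S w l (n + 1) x} ≤ eLpNorm w 1 μ := by
  set M := hopfMax S w l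
  have hD : MeasurableSet {x | 0 < M (n + 1) x} :=
    measurableSet_lt measurable_const (M (n + 1)).measurable
  have hpt : ∀ᵐ x ∂μ, {x | 0 < M (n + 1) x}.indicator (fun _ => ENNReal.ofReal l) x
      + ‖M (n + 1) x‖ₑ ≤ ‖w x + S (M n) x‖ₑ := by
    filter_upwards [coeFn_hopfMax_succ S w l n] with x hx
    by_cases hpos : 0 < M (n + 1) x
    · have hval : M (n + 1) x = w x - l + S (M n) x :=
        hx.trans (max_eq_left ((lt_max_iff.1 (hx ▸ hpos)).resolve_right (lt_irrefl 0)).le)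
      rw [indicator_of_mem (by exact hpos), Real.enorm_of_nonneg hpos.le,
        ← ENNReal.ofReal_add hl hpos.le, hval]
      exact (ENNReal.ofReal_le_ofReal (by linarith)).trans (Real.ofReal_le_enorm _)
    · have hval : M (n + 1) x = 0 := le_antisymm (not_lt.1 hpos) (hx ▸ le_max_right _ _)
      simp [hval]
  have hsum : ENNReal.ofReal l * μ {x | 0 < M (n + 1) x} + eLpNorm (M (n + 1)) 1 μ
      ≤ eLpNorm w 1 μ + eLpNorm (M (n + 1)) 1 μ :=
    calc
      _ = ∫⁻ x, {x | 0 < M (n + 1) x}.indicator (fun _ => ENNReal.ofReal l) x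
            + ‖M (n + 1) x‖ₑ ∂μ := by
        rw [lintegral_add_left (measurable_const.indicator hD), lintegral_indicator_const hD,
          eLpNorm_one_eq_lintegral_enorm]
      _ ≤ eLpNorm (w + S (M n) : Ω → ℝ) 1 μ := by
        rw [eLpNorm_one_eq_lintegral_enorm]
        exact lintegral_mono_ae hpt
      _ ≤ eLpNorm w 1 μ + eLpNorm (S (M n)) 1 μ :=
        eLpNorm_add_le w.aestronglyMeasurable (S (M n)).aestronglyMeasurable le_rfl
      _ ≤ eLpNorm w 1 μ + eLpNorm (M (n + 1)) 1 μ := by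
        gcongr
        refine (hS.norm_one _ (memL1pLinf_iff.2 (hopfMax_mem_L1AddLinf hS hw hl n))).trans ?_
        refine eLpNorm_mono_ae ?_
        filter_upwards [hopfMax_nonneg S w l n, hopfMax_le_succ hS hw hl n] with x h₀ h₁
        exact abs_le_abs_of_nonneg h₀ h₁
  exact ENNReal.le_of_add_le_add_right (memLp_hopfMax hS hw hl (n + 1)).eLpNorm_ne_top hsum

theorem ofReal_mul_measure_exists_lt_sum_iterate_le (hS : IsPosDS μ S) (hw : MemLp w 1 μ)
    (hl : 0 ≤ l) :
    ENNReal.ofReal l * μ {x | ∃ n : ℕ, l * n < (∑ k ∈ Finset.range n, S^[k] w) x}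
      ≤ eLpNorm w 1 μ := by
  have hle (m : ℕ) := sum_iterate_le_hopfMax_add hS hw hl m
  rw [ofPred_exists, measure_iUnion_eq_iSup_accumulate, ENNReal.mul_iSup]
  refine iSup_le fun n => le_trans ?_ (ofReal_mul_measure_hopfMax_succ_pos_le hS hw hl n)
  gcongr ENNReal.ofReal l * ?_
  refine measure_mono_ae ?_
  have hmono (m : ℕ) (hm : m ≤ n) := hopfMax_mono hS hw hl (hm.trans n.le_succ)
  filter_upwards [ae_all_iff.2 hle, (ae_ball_iff (finite_Iic n).countable).2 hmono]
    with x hx hxn hacc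
  obtain ⟨m, hm, hlt⟩ := mem_accumulate.1 hacc
  exact (by linarith [hx m, mem_ofPred.1 hlt] : 0 < hopfMax S w l m x).trans_le (hxn m hm)

end HopfMax

/-- `T` is linear on `L¹(μ) + L^∞(μ)` and dominated by `S`, that is `|T f| ≤ S |f|`. Unlike being a
complexification, this survives multiplication of `T` by unimodular scalars. -/
structure IsDominatedBy (μ : Measure Ω) (T : (Ω →ₘ[μ] ℂ) → (Ω →ₘ[μ] ℂ))
    (S : (Ω →ₘ[μ] ℝ) → (Ω →ₘ[μ] ℝ)) : Prop where
  map_add : ∀ f g, f ∈ L1AddLinf ℂ ℂ μ → g ∈ L1AddLinf ℂ ℂ μ → T (f + g) = T f + T g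
  map_smul : ∀ (c : ℂ) (f), f ∈ L1AddLinf ℂ ℂ μ → T (c • f) = c • T f
  norm_map_le : ∀ f, f ∈ L1AddLinf ℂ ℂ μ → ∀ᵐ x ∂μ, ‖T f x‖ ≤ S (normAE f) x

namespace IsDominatedBy

variable {T : (Ω →ₘ[μ] ℂ) → (Ω →ₘ[μ] ℂ)} {S : (Ω →ₘ[μ] ℝ) → (Ω →ₘ[μ] ℝ)} {f g : Ω →ₘ[μ] ℂ}

theorem map_mem (hT : IsDominatedBy μ T S) (hS : IsPosDS μ S) (hf : f ∈ L1AddLinf ℂ ℂ μ) :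
    T f ∈ L1AddLinf ℂ ℂ μ :=
  mem_L1AddLinf_of_norm_le_norm (hS.map_mem (normAE_mem_L1AddLinf hf)) <|
    (hT.norm_map_le f hf).mono fun _ hx => hx.trans (le_abs_self _)

theorem iterate (hT : IsDominatedBy μ T S) (hS : IsPosDS μ S) (k : ℕ) :
    IsDominatedBy μ T^[k] S^[k] := by
  induction k with
  | zero => exact ⟨by simp, by simp, fun f _ => (coeFn_normAE f).symm.le⟩
  | succ k ih =>
    refine ⟨fun f g hf hg => ?_, fun c f hf => ?_, fun f hf => ?_⟩ <;>
      simp only [Function.iterate_succ_apply]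
    · rw [hT.map_add f g hf hg, ih.map_add _ _ (hT.map_mem hS hf) (hT.map_mem hS hg)]
    · rw [hT.map_smul c f hf, ih.map_smul c _ (hT.map_mem hS hf)]
    · have hTf := normAE_mem_L1AddLinf (hT.map_mem hS hf)
      have hle : normAE (T f) ≤ᵐ[μ] S (normAE f) := by
        filter_upwards [coeFn_normAE (T f), hT.norm_map_le f hf] with x h₁ h₂ using h₁.trans_le h₂
      filter_upwards [ih.norm_map_le _ (hT.map_mem hS hf), (hS.iterate k).map_mono hTf
        (hS.map_mem (normAE_mem_L1AddLinf hf)) hle] with x h₁ h₂ using h₁.trans h₂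

theorem smul {c : ℂ} (hT : IsDominatedBy μ T S) (hc : ‖c‖ ≤ 1) :
    IsDominatedBy μ (fun f => c • T f) S where
  map_add f g hf hg := by simp only [hT.map_add f g hf hg, smul_add]
  map_smul d f hf := by simp only [hT.map_smul d f hf, smul_comm c d]
  norm_map_le f hf := by
    filter_upwards [hT.norm_map_le f hf, AEEqFun.coeFn_smul c (T f)] with x hx hsmul
    rw [hsmul, Pi.smul_apply, norm_smul]
    exact (mul_le_of_le_one_left (norm_nonneg _) hc).trans hx

theorem iterate_smul_apply (hT : IsDominatedBy μ T S) (hS : IsPosDS μ S)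
    (hf : f ∈ L1AddLinf ℂ ℂ μ) (c : ℂ) (k : ℕ) :
    (fun f => c • T f)^[k] f = c ^ k • T^[k] f := by
  induction k with
  | zero => simp
  | succ k ih =>
    rw [Function.iterate_succ_apply', Function.iterate_succ_apply', ih,
      hT.map_smul _ _ ((hT.iterate hS k).map_mem (hS.iterate k) hf), smul_smul, ← pow_succ']

theorem eLpNorm_two_map_le (hT : IsDominatedBy μ T S) (hS : IsPosDS μ S) (hf : MemLp f 2 μ) :
    eLpNorm (T f) 2 μ ≤ eLpNorm f 2 μ :=
  calc
    _ ≤ eLpNorm (S (normAE f)) 2 μ := eLpNorm_mono_ae <|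
      (hT.norm_map_le f (mem_L1AddLinf_of_memLp one_le_two hf)).mono
        fun _ hx => hx.trans (le_abs_self _)
    _ ≤ eLpNorm (normAE f) 2 μ := hS.eLpNorm_two_map_le (memLp_normAE_iff.2 hf)
    _ = eLpNorm f 2 μ := eLpNorm_normAE f 2

/-- The contraction which `T` induces on `L²(μ)`. -/
noncomputable def toL2 (hT : IsDominatedBy μ T S) (hS : IsPosDS μ S) :
    Lp ℂ 2 μ →L[ℂ] Lp ℂ 2 μ :=
  have hmem (f : Lp ℂ 2 μ) : (f : Ω →ₘ[μ] ℂ) ∈ L1AddLinf ℂ ℂ μ :=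
    mem_L1AddLinf_of_memLp one_le_two (Lp.memLp f)
  LinearMap.mkContinuous
    { toFun f := ⟨T f, (hT.eLpNorm_two_map_le hS (Lp.memLp f)).trans_lt (Lp.memLp f).2⟩
      map_add' f g := Subtype.ext (hT.map_add f g (hmem f) (hmem g))
      map_smul' c f := Subtype.ext (hT.map_smul c f (hmem f)) }
    1 fun f => by
      rw [one_mul, Lp.norm_def, Lp.norm_def]
      exact ENNReal.toReal_mono (Lp.eLpNorm_ne_top f) (hT.eLpNorm_two_map_le hS (Lp.memLp f))

theorem norm_toL2_le (hT : IsDominatedBy μ T S) (hS : IsPosDS μ S) : ‖hT.toL2 hS‖ ≤ 1 :=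
  (hT.toL2 hS).opNorm_le_bound zero_le_one fun f => by
    rw [one_mul, Lp.norm_def, Lp.norm_def]
    exact ENNReal.toReal_mono (Lp.eLpNorm_ne_top f) (hT.eLpNorm_two_map_le hS (Lp.memLp f))

theorem coe_toL2_iterate (hT : IsDominatedBy μ T S) (hS : IsPosDS μ S) (k : ℕ) (f : Lp ℂ 2 μ) :
    ((hT.toL2 hS)^[k] f : Ω →ₘ[μ] ℂ) = T^[k] f := by
  induction k with
  | zero => rfl
  | succ k ih =>
    rw [Function.iterate_succ_apply', Function.iterate_succ_apply', ← ih]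
    rfl

theorem coe_birkhoffAverage_toL2 (hT : IsDominatedBy μ T S) (hS : IsPosDS μ S) (n : ℕ)
    (f : Lp ℂ 2 μ) :
    ((birkhoffAverage ℂ (hT.toL2 hS) _root_.id n f : Lp ℂ 2 μ) : Ω →ₘ[μ] ℂ)
      = besicovitchAvg μ T (fun _ => 1) n f := by
  simp only [birkhoffAverage, birkhoffSum, besicovitchAvg, _root_.id, one_smul,
    ← coe_toL2_iterate hT hS]
  exact congrArg ((n : ℂ)⁻¹ • ·) (map_sum (Lp ℂ 2 μ).subtype _ _)

end IsDominatedBy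

section Averages

variable {T : (Ω →ₘ[μ] ℂ) → (Ω →ₘ[μ] ℂ)} {S : (Ω →ₘ[μ] ℝ) → (Ω →ₘ[μ] ℝ)} {β : ℕ → ℂ}
  {f g : Ω →ₘ[μ] ℂ} {w : Ω →ₘ[μ] ℝ} {C a l : ℝ}

theorem besicovitchAvg_sum_mul {ι : Type*} (s : Finset ι) (z : ι → ℂ) (γ : ι → ℕ → ℂ) (n : ℕ) :
    besicovitchAvg μ T (fun k => ∑ j ∈ s, z j * γ j k) n f
      = ∑ j ∈ s, z j • besicovitchAvg μ T (γ j) n f := by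
  have hsmul (k : ℕ) : (∑ j ∈ s, z j * γ j k) • T^[k] f = ∑ j ∈ s, z j • γ j k • T^[k] f := by
    exact (Finset.sum_smul (M := Ω →ₘ[μ] ℂ)).trans <|
      Finset.sum_congr rfl fun j _ => mul_smul (z j) (γ j k) (T^[k] f)
  simp only [besicovitchAvg, hsmul, Finset.smul_sum]
  rw [Finset.sum_comm]
  simp only [smul_comm (n : ℂ)⁻¹]

theorem besicovitchAvg_sub_left (β γ : ℕ → ℂ) (n : ℕ) :
    besicovitchAvg μ T β n f - besicovitchAvg μ T γ n f = besicovitchAvg μ T (β - γ) n f := by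
  have hsub (k : ℕ) : (β - γ) k • T^[k] f = β k • T^[k] f - γ k • T^[k] f :=
    sub_smul (β k) (γ k) (T^[k] f)
  simp only [besicovitchAvg, hsub, Finset.sum_sub_distrib, smul_sub]

theorem norm_besicovitchAvg_le (β : ℕ → ℂ) (n : ℕ) (f : Ω →ₘ[μ] ℂ) :
    ∀ᵐ x ∂μ, ‖besicovitchAvg μ T β n f x‖
      ≤ (n : ℝ)⁻¹ * ∑ k ∈ Finset.range n, ‖β k‖ * ‖T^[k] f x‖ := by
  have hsmul : ∀ᵐ x ∂μ, ∀ k, (β k • T^[k] f) x = β k • T^[k] f x :=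
    ae_all_iff.2 fun k => AEEqFun.coeFn_smul (β k) (T^[k] f)
  filter_upwards [hsmul, AEEqFun.coeFn_fun_finsetSum (Finset.range n) fun k => β k • T^[k] f,
    AEEqFun.coeFn_smul (n : ℂ)⁻¹ (∑ k ∈ Finset.range n, β k • T^[k] f)] with x hx hsum havg
  rw [besicovitchAvg, havg, Pi.smul_apply, hsum, norm_smul, norm_inv, Complex.norm_natCast]
  gcongr
  exact norm_sum_le_of_le _ fun k _ => (congrArg norm (hx k)).trans_le (norm_smul_le _ _)

namespace IsDominatedBy

theorem besicovitchAvg_sub_right (hT : IsDominatedBy μ T S) (hS : IsPosDS μ S)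
    (hf : f ∈ L1AddLinf ℂ ℂ μ) (hg : g ∈ L1AddLinf ℂ ℂ μ) (β : ℕ → ℂ) (n : ℕ) :
    besicovitchAvg μ T β n (f - g) = besicovitchAvg μ T β n f - besicovitchAvg μ T β n g := by
  have hsub (k : ℕ) : T^[k] (f - g) = T^[k] f - T^[k] g := by
    have hTk := hT.iterate hS k
    rw [eq_sub_iff_add_eq, ← hTk.map_add _ _ (sub_mem hf hg) hg, sub_add_cancel]
  simp only [besicovitchAvg, hsub, smul_sub, Finset.sum_sub_distrib]

theorem besicovitchAvg_smul_one (hT : IsDominatedBy μ T S) (hS : IsPosDS μ S)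
    (hf : f ∈ L1AddLinf ℂ ℂ μ) (c : ℂ) (n : ℕ) :
    besicovitchAvg μ (fun f => c • T f) (fun _ => 1) n f = besicovitchAvg μ T (c ^ ·) n f := by
  simp only [besicovitchAvg, hT.iterate_smul_apply hS hf, one_smul]

theorem norm_besicovitchAvg_le (hT : IsDominatedBy μ T S) (hS : IsPosDS μ S)
    (hβ : ∀ k, ‖β k‖ ≤ C) (hw : MemLp w 1 μ) (ha : 0 ≤ a) (hf : ∀ᵐ x ∂μ, ‖f x‖ ≤ w x + a) (n : ℕ) :
    ∀ᵐ x ∂μ, ‖besicovitchAvg μ T β n f x‖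
      ≤ C * ((n : ℝ)⁻¹ * (∑ k ∈ Finset.range n, S^[k] w) x + a) := by
  have hC : 0 ≤ C := (norm_nonneg _).trans (hβ 0)
  have hfL : f ∈ L1AddLinf ℂ ℂ μ := mem_L1AddLinf_of_norm_le (memLp_one_iff_integrable.1 hw) hf
  have hwL : w ∈ L1AddLinf ℝ ℝ μ := mem_L1AddLinf_of_memLp le_rfl hw
  have hiter (k : ℕ) : ∀ᵐ x ∂μ, ‖T^[k] f x‖ ≤ S^[k] w x + a := by
    have hnorm : ∀ᵐ x ∂μ, normAE f x ≤ w x + a := by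
      filter_upwards [coeFn_normAE f, hf] with x h₁ h₂ using h₁.trans_le h₂
    filter_upwards [(hT.iterate hS k).norm_map_le f hfL, (hS.iterate k).map_le_add_const
      (normAE_mem_L1AddLinf hfL) hwL ha hnorm] with x h₁ h₂ using h₁.trans h₂
  filter_upwards [_root_.norm_besicovitchAvg_le (T := T) β n f, ae_all_iff.2 hiter,
    AEEqFun.coeFn_fun_finsetSum (Finset.range n) fun k => S^[k] w] with x havg hx hsum
  rw [hsum]
  calc
    _ ≤ (n : ℝ)⁻¹ * ∑ k ∈ Finset.range n, C * (S^[k] w x + a) := by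
      refine havg.trans ?_
      gcongr with k
      exacts [hβ k, hx k]
    _ = C * ((n : ℝ)⁻¹ * ∑ k ∈ Finset.range n, S^[k] w x + (n : ℝ)⁻¹ * n * a) := by
      rw [← Finset.mul_sum, Finset.sum_add_distrib, Finset.sum_const, Finset.card_range,
        nsmul_eq_mul]
      ring
    _ ≤ _ := by
      gcongr
      exact mul_le_of_le_one_left ha inv_mul_le_one

theorem ofReal_mul_measure_exists_lt_norm_besicovitchAvg_le (hT : IsDominatedBy μ T S)
    (hS : IsPosDS μ S) (hβ : ∀ k, ‖β k‖ ≤ C) (hw : MemLp w 1 μ) (ha : 0 ≤ a) (hl : 0 ≤ l)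
    (hf : ∀ᵐ x ∂μ, ‖f x‖ ≤ w x + a) :
    ENNReal.ofReal l * μ {x | ∃ n, C * (l + a) < ‖besicovitchAvg μ T β n f x‖}
      ≤ eLpNorm w 1 μ := by
  refine le_trans ?_ (ofReal_mul_measure_exists_lt_sum_iterate_le hS hw hl)
  gcongr ENNReal.ofReal l * ?_
  refine measure_mono_ae ?_
  filter_upwards [ae_all_iff.2 (hT.norm_besicovitchAvg_le hS hβ hw ha hf)] with x hx
  rintro ⟨n, hn⟩
  refine ⟨n, ?_⟩
  have hC : 0 ≤ C := (norm_nonneg _).trans (hβ 0)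
  have hlt : l < (n : ℝ)⁻¹ * (∑ k ∈ Finset.range n, S^[k] w) x :=
    lt_of_add_lt_add_right (lt_of_mul_lt_mul_left (hn.trans_le (hx n)) hC)
  obtain rfl | hn0 := n.eq_zero_or_pos
  · simp [hl.not_gt] at hlt
  · rwa [← div_eq_inv_mul, lt_div_iff₀ (by positivity)] at hlt

theorem ofReal_sq_mul_measure_exists_lt_norm_besicovitchAvg_le (hT : IsDominatedBy μ T S)
    (hS : IsPosDS μ S) (hβ : ∀ k, ‖β k‖ ≤ C) (ha : 0 < a) (hf : MemLp f 2 μ) :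
    ENNReal.ofReal (a ^ 2) * μ {x | ∃ n, C * (a + a) < ‖besicovitchAvg μ T β n f x‖}
      ≤ eLpNorm f 2 μ ^ 2 := by
  have hw : MemLp (a⁻¹ • normAE f ^ 2 : Ω →ₘ[μ] ℝ) 1 μ :=
    ((memLp_one_normAE_sq hf).const_smul a⁻¹).ae_eq (AEEqFun.coeFn_smul _ _).symm
  have hfw : ∀ᵐ x ∂μ, ‖f x‖ ≤ (a⁻¹ • normAE f ^ 2 : Ω →ₘ[μ] ℝ) x + a := by
    filter_upwards [AEEqFun.coeFn_smul a⁻¹ (normAE f ^ 2), coeFn_normAE_sq f] with x hsmul hx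
    rw [hsmul, Pi.smul_apply, hx, smul_eq_mul, inv_mul_eq_div, div_add' _ _ _ ha.ne',
      le_div_iff₀ ha]
    nlinarith [sq_nonneg (‖f x‖ - a)]
  have hmax := hT.ofReal_mul_measure_exists_lt_norm_besicovitchAvg_le hS hβ hw ha.le ha.le hfw
  rw [eLpNorm_congr_ae (AEEqFun.coeFn_smul _ _), eLpNorm_const_smul, eLpNorm_normAE_sq] at hmax
  calc
    _ = ENNReal.ofReal a *
        (ENNReal.ofReal a * μ {x | ∃ n, C * (a + a) < ‖besicovitchAvg μ T β n f x‖}) := by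
      rw [pow_two, ENNReal.ofReal_mul ha.le, mul_assoc]
    _ ≤ ENNReal.ofReal a * (‖a⁻¹‖ₑ * eLpNorm f 2 μ ^ 2) := by gcongr
    _ = eLpNorm f 2 μ ^ 2 := by
      rw [← mul_assoc, Real.enorm_of_nonneg (by positivity), ← ENNReal.ofReal_mul ha.le,
        mul_inv_cancel₀ ha.ne', ENNReal.ofReal_one, one_mul]

end IsDominatedBy

end Averages

section Complexification

/-- The class of `ω ↦ g ω + i h ω`. -/
noncomputable def complexAE (g h : Ω →ₘ[μ] ℝ) : Ω →ₘ[μ] ℂ :=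
  ofRealAE μ g + Complex.I • ofRealAE μ h

theorem coeFn_complexAE (g h : Ω →ₘ[μ] ℝ) : complexAE g h =ᵐ[μ] fun x => ⟨g x, h x⟩ := by
  filter_upwards [AEEqFun.coeFn_add (ofRealAE μ g) (Complex.I • ofRealAE μ h),
    AEEqFun.coeFn_smul Complex.I (ofRealAE μ h),
    AEEqFun.coeFn_comp _ Complex.continuous_ofReal g,
    AEEqFun.coeFn_comp _ Complex.continuous_ofReal h] with x hadd hsmul hg hh
  rw [complexAE, hadd, Pi.add_apply, hsmul, Pi.smul_apply, ofRealAE, hg, ofRealAE, hh]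
  apply Complex.ext <;> simp

theorem complexAE_add (g h g' h' : Ω →ₘ[μ] ℝ) :
    complexAE g h + complexAE g' h' = complexAE (g + g') (h + h') := by
  refine AEEqFun.ext ?_
  filter_upwards [AEEqFun.coeFn_add (complexAE g h) (complexAE g' h'), coeFn_complexAE g h,
    coeFn_complexAE g' h', coeFn_complexAE (g + g') (h + h'), AEEqFun.coeFn_add g g',
    AEEqFun.coeFn_add h h'] with x h₁ h₂ h₃ h₄ h₅ h₆
  apply Complex.ext <;> simp [h₁, h₂, h₃, h₄, h₅, h₆]

theorem smul_complexAE (c : ℂ) (g h : Ω →ₘ[μ] ℝ) :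
    c • complexAE g h = complexAE (c.re • g - c.im • h) (c.re • h + c.im • g) := by
  refine AEEqFun.ext ?_
  filter_upwards [AEEqFun.coeFn_smul c (complexAE g h), coeFn_complexAE g h,
    coeFn_complexAE (c.re • g - c.im • h) (c.re • h + c.im • g),
    AEEqFun.coeFn_sub (c.re • g) (c.im • h), AEEqFun.coeFn_add (c.re • h) (c.im • g),
    AEEqFun.coeFn_smul c.re g, AEEqFun.coeFn_smul c.im h, AEEqFun.coeFn_smul c.re h,
    AEEqFun.coeFn_smul c.im g] with x h₁ h₂ h₃ h₄ h₅ h₆ h₇ h₈ h₉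
  apply Complex.ext <;> simp [h₁, h₂, h₃, h₄, h₅, h₆, h₇, h₈, h₉]

theorem exists_eq_complexAE {f : Ω →ₘ[μ] ℂ} (hf : f ∈ L1AddLinf ℂ ℂ μ) :
    ∃ g ∈ L1AddLinf ℝ ℝ μ, ∃ h ∈ L1AddLinf ℝ ℝ μ, f = complexAE g h := by
  have hre := AEEqFun.coeFn_comp _ Complex.continuous_re f
  have him := AEEqFun.coeFn_comp _ Complex.continuous_im f
  refine ⟨f.comp _ Complex.continuous_re, mem_L1AddLinf_of_norm_le_norm hf ?_,
    f.comp _ Complex.continuous_im, mem_L1AddLinf_of_norm_le_norm hf ?_, AEEqFun.ext ?_⟩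
  · exact hre.mono fun x hx => hx ▸ Complex.abs_re_le_norm (f x)
  · exact him.mono fun x hx => hx ▸ Complex.abs_im_le_norm (f x)
  · filter_upwards [coeFn_complexAE (f.comp _ Complex.continuous_re)
      (f.comp _ Complex.continuous_im), hre, him] with x h₁ h₂ h₃
    rw [h₁, h₂, h₃]
    rfl

variable {T : (Ω →ₘ[μ] ℂ) → (Ω →ₘ[μ] ℂ)} {S : (Ω →ₘ[μ] ℝ) → (Ω →ₘ[μ] ℝ)} {g h : Ω →ₘ[μ] ℝ}

namespace IsPosDS

theorem map_re_smul_add_im_smul_le (hS : IsPosDS μ S) (hg : g ∈ L1AddLinf ℝ ℝ μ)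
    (hh : h ∈ L1AddLinf ℝ ℝ μ) (hgh : complexAE g h ∈ L1AddLinf ℂ ℂ μ) (c : ℂ) :
    ∀ᵐ x ∂μ, c.re * S g x + c.im * S h x ≤ ‖c‖ * S (normAE (complexAE g h)) x := by
  have hnL : normAE (complexAE g h) ∈ L1AddLinf ℝ ℝ μ := normAE_mem_L1AddLinf hgh
  have hle : (c.re • g + c.im • h : Ω →ₘ[μ] ℝ) ≤ᵐ[μ]
      (‖c‖ • normAE (complexAE g h) : Ω →ₘ[μ] ℝ) := by
    filter_upwards [AEEqFun.coeFn_add (c.re • g) (c.im • h), AEEqFun.coeFn_smul c.re g,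
      AEEqFun.coeFn_smul c.im h, AEEqFun.coeFn_smul ‖c‖ (normAE (complexAE g h)),
      coeFn_normAE (complexAE g h), coeFn_complexAE g h] with x h₁ h₂ h₃ h₄ h₅ h₆
    simp only [h₁, h₂, h₃, h₄, h₅, h₆, Pi.add_apply, Pi.smul_apply, smul_eq_mul]
    have hre := Complex.re_le_norm (starRingEnd ℂ c * ⟨g x, h x⟩)
    rw [norm_mul, RCLike.norm_conj] at hre
    simpa using hre
  have hmono := hS.map_mono (add_mem (Submodule.smul_mem _ _ hg) (Submodule.smul_mem _ _ hh))
    (Submodule.smul_mem _ _ hnL) hle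
  rw [hS.map_add _ _ (memL1pLinf_iff.2 (Submodule.smul_mem _ _ hg))
    (memL1pLinf_iff.2 (Submodule.smul_mem _ _ hh)), hS.map_smul _ _ (memL1pLinf_iff.2 hg),
    hS.map_smul _ _ (memL1pLinf_iff.2 hh), hS.map_smul _ _ (memL1pLinf_iff.2 hnL)] at hmono
  filter_upwards [hmono, AEEqFun.coeFn_add (c.re • S g) (c.im • S h),
    AEEqFun.coeFn_smul c.re (S g), AEEqFun.coeFn_smul c.im (S h),
    AEEqFun.coeFn_smul ‖c‖ (S (normAE (complexAE g h)))] with x hx h₁ h₂ h₃ h₄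
  simpa [h₁, h₂, h₃, h₄] using hx

-- The bounds for countably many `c` extend by density to all `c`, in particular to the value.
theorem norm_complexAE_map_le (hS : IsPosDS μ S) (hg : g ∈ L1AddLinf ℝ ℝ μ)
    (hh : h ∈ L1AddLinf ℝ ℝ μ) (hgh : complexAE g h ∈ L1AddLinf ℂ ℂ μ) :
    ∀ᵐ x ∂μ, ‖complexAE (S g) (S h) x‖ ≤ S (normAE (complexAE g h)) x := by
  have hdense : ∀ᵐ x ∂μ, ∀ n, _ := ae_all_iff.2 fun n =>
    hS.map_re_smul_add_im_smul_le hg hh hgh (TopologicalSpace.denseSeq ℂ n)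
  filter_upwards [hdense, coeFn_complexAE (S g) (S h),
    hS.map_nonneg (normAE_mem_L1AddLinf hgh) (normAE_nonneg _)] with x hx hval hnonneg
  have hall (c : ℂ) : c.re * S g x + c.im * S h x ≤ ‖c‖ * S (normAE (complexAE g h)) x :=
    (TopologicalSpace.denseRange_denseSeq ℂ).induction_on c
      (isClosed_le (by fun_prop) (by fun_prop)) hx
  set z := complexAE (S g) (S h) x
  obtain hz | hz := (norm_nonneg z).eq_or_lt
  · exact hz.symm.trans_le hnonneg
  · refine le_of_mul_le_mul_left ?_ hz
    have := hall z
    rw [Complex.norm_mul_self_eq_normSq, Complex.normSq_apply]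
    simpa [hval] using this

theorem isDominatedBy_of_complexAE (hS : IsPosDS μ S)
    (hTS : ∀ g h : Ω →ₘ[μ] ℝ, MemL1pLinf μ g → MemL1pLinf μ h →
      T (complexAE g h) = complexAE (S g) (S h)) :
    IsDominatedBy μ T S where
  map_add f f' hf hf' := by
    obtain ⟨g, hg, h, hh, rfl⟩ := exists_eq_complexAE hf
    obtain ⟨g', hg', h', hh', rfl⟩ := exists_eq_complexAE hf'
    have hgg' := add_mem hg hg'
    have hhh' := add_mem hh hh'
    rw [← memL1pLinf_iff] at hg hh hg' hh' hgg' hhh'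
    rw [complexAE_add, hTS _ _ hgg' hhh', hTS _ _ hg hh, hTS _ _ hg' hh', complexAE_add,
      hS.map_add _ _ hg hg', hS.map_add _ _ hh hh']
  map_smul c f hf := by
    obtain ⟨g, hg, h, hh, rfl⟩ := exists_eq_complexAE hf
    have hreg := Submodule.smul_mem _ c.re hg
    have himh := Submodule.smul_mem _ c.im hh
    have hreh := Submodule.smul_mem _ c.re hh
    have himg := Submodule.smul_mem _ c.im hg
    have hsub := hS.map_sub hreg himh
    have hre := sub_mem hreg himh
    have him := add_mem hreh himg
    rw [← memL1pLinf_iff] at hg hh hreg himh hreh himg hre him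
    rw [smul_complexAE, hTS _ _ hre him, hTS _ _ hg hh, smul_complexAE, hsub,
      hS.map_add _ _ hreh himg, hS.map_smul _ _ hg, hS.map_smul _ _ hh, hS.map_smul _ _ hh,
      hS.map_smul _ _ hg]
  norm_map_le f hf := by
    obtain ⟨g, hg, h, hh, rfl⟩ := exists_eq_complexAE hf
    rw [hTS g h (memL1pLinf_iff.2 hg) (memL1pLinf_iff.2 hh)]
    exact hS.norm_complexAE_map_le hg hh hf

end IsPosDS

end Complexification

section AlmostUniformlyCauchy

variable {E : Type*} [NormedAddCommGroup E] {F G : ℕ → Ω →ₘ[μ] E}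

/-- The points at which the tail of `F` from index `N` on oscillates by more than `δ`. -/
def oscSet (F : ℕ → Ω →ₘ[μ] E) (δ : ℝ) (N : ℕ) : Set Ω :=
  {x | ∃ n ≥ N, ∃ m ≥ N, δ < ‖F n x - F m x‖}

/-- `F` is almost uniformly Cauchy, phrased through the measures of its oscillation sets. -/
def AUCauchy (F : ℕ → Ω →ₘ[μ] E) : Prop :=
  ∀ δ : ℝ, 0 < δ → ∀ ε : ℝ≥0∞, 0 < ε → ∃ N, μ (oscSet F δ N) ≤ ε

theorem notMem_oscSet {δ : ℝ} {N : ℕ} {x : Ω} :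
    x ∉ oscSet F δ N ↔ ∀ n ≥ N, ∀ m ≥ N, ‖F n x - F m x‖ ≤ δ := by
  simp [oscSet]

theorem auCauchy_const (f : Ω →ₘ[μ] E) : AUCauchy fun _ => f := by
  refine fun δ hδ ε _ => ⟨0, ?_⟩
  have hempty : oscSet (fun _ => f) δ 0 = ∅ :=
    eq_empty_of_forall_notMem fun x => notMem_oscSet.2 (by simp [hδ.le])
  simp [hempty]

theorem AUCauchy.congr (hF : AUCauchy F) (h : F =ᶠ[atTop] G) : AUCauchy G := by
  obtain ⟨M, hM⟩ := eventually_atTop.1 h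
  intro δ hδ ε hε
  obtain ⟨N, hN⟩ := hF δ hδ ε hε
  refine ⟨max N M, (measure_mono ?_).trans hN⟩
  rintro x ⟨n, hn, m, hm, hx⟩
  rw [ge_iff_le, max_le_iff] at hn hm
  exact ⟨n, hn.1, m, hm.1, by rwa [hM n hn.2, hM m hm.2]⟩

theorem auCauchy_of_approx
    (h : ∀ δ : ℝ, 0 < δ → ∀ ε : ℝ≥0∞, 0 < ε → ∃ G : ℕ → Ω →ₘ[μ] E, AUCauchy G ∧
      ∃ N, μ {x | ∃ n ≥ N, δ < ‖(F n - G n) x‖} ≤ ε) :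
    AUCauchy F := by
  intro δ hδ ε hε
  have hε₂ := ENNReal.half_pos hε.ne'
  obtain ⟨G, hG, N, hN⟩ := h (δ / 3) (by positivity) (ε / 2) hε₂
  obtain ⟨M, hM⟩ := hG (δ / 3) (by positivity) (ε / 2) hε₂
  refine ⟨max N M, ?_⟩
  have hsub : (oscSet F δ (max N M) : Set Ω) ≤ᵐ[μ]
      ({x | ∃ n ≥ N, δ / 3 < ‖(F n - G n) x‖} ∪ oscSet G (δ / 3) M : Set Ω) := by
    filter_upwards [ae_all_iff.2 fun n => AEEqFun.coeFn_sub (F n) (G n)] with x hx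
    refine not_imp_not.1 fun hnot => ?_
    obtain ⟨hFG, hGG⟩ := not_or.1 hnot
    simp only [mem_ofPred_eq, not_exists, not_and, not_lt, hx, Pi.sub_apply] at hFG
    rw [notMem_oscSet] at hGG
    refine notMem_oscSet.2 fun n hn m hm => ?_
    rw [ge_iff_le, max_le_iff] at hn hm
    calc ‖F n x - F m x‖
        = ‖(F n x - G n x) + (G n x - G m x) - (F m x - G m x)‖ := by abel_nf
      _ ≤ ‖F n x - G n x‖ + ‖G n x - G m x‖ + ‖F m x - G m x‖ :=
        (norm_sub_le _ _).trans (add_le_add_left (norm_add_le _ _) _)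
      _ ≤ δ / 3 + δ / 3 + δ / 3 :=
        add_le_add_three (hFG n hn.1) (hGG n hn.2 m hm.2) (hFG m hm.1)
      _ = δ := by ring
  calc μ (oscSet F δ (max N M)) ≤ ε / 2 + ε / 2 :=
        (measure_mono_ae hsub).trans ((measure_union_le _ _).trans (add_le_add hN hM))
    _ = ε := ENNReal.add_halves ε

theorem AUCauchy.add (hF : AUCauchy F) (hG : AUCauchy G) : AUCauchy fun n => F n + G n := by
  intro δ hδ ε hε
  have hε₂ := ENNReal.half_pos hε.ne'
  obtain ⟨N, hN⟩ := hF (δ / 2) (by positivity) (ε / 2) hε₂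
  obtain ⟨M, hM⟩ := hG (δ / 2) (by positivity) (ε / 2) hε₂
  refine ⟨max N M, ?_⟩
  have hsub : (oscSet (fun n => F n + G n) δ (max N M) : Set Ω) ≤ᵐ[μ]
      (oscSet F (δ / 2) N ∪ oscSet G (δ / 2) M : Set Ω) := by
    filter_upwards [ae_all_iff.2 fun n => AEEqFun.coeFn_add (F n) (G n)] with x hx
    refine not_imp_not.1 fun hnot => ?_
    obtain ⟨hFF, hGG⟩ := not_or.1 hnot
    rw [notMem_oscSet] at hFF hGG
    refine notMem_oscSet.2 fun n hn m hm => ?_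
    rw [ge_iff_le, max_le_iff] at hn hm
    rw [hx, hx, Pi.add_apply, Pi.add_apply, add_sub_add_comm]
    linarith [norm_add_le (F n x - F m x) (G n x - G m x), hFF n hn.1 m hm.1, hGG n hn.2 m hm.2]
  calc μ (oscSet (fun n => F n + G n) δ (max N M)) ≤ ε / 2 + ε / 2 :=
        (measure_mono_ae hsub).trans ((measure_union_le _ _).trans (add_le_add hN hM))
    _ = ε := ENNReal.add_halves ε

theorem AUCauchy.const_smul {𝕜 : Type*} [NormedField 𝕜] [NormedSpace 𝕜 E] (hF : AUCauchy F)
    (c : 𝕜) : AUCauchy fun n => c • F n := by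
  intro δ hδ ε hε
  obtain ⟨N, hN⟩ := hF (δ / (‖c‖ + 1)) (by positivity) ε hε
  refine ⟨N, (measure_mono_ae ?_).trans hN⟩
  filter_upwards [ae_all_iff.2 fun n => AEEqFun.coeFn_smul c (F n)] with x hx
  refine not_imp_not.1 fun hnot => notMem_oscSet.2 fun n hn m hm => ?_
  have hle := (le_div_iff₀ (by positivity)).1 (notMem_oscSet.1 hnot n hn m hm)
  rw [hx, hx, Pi.smul_apply, Pi.smul_apply, ← smul_sub, norm_smul]
  linarith [norm_nonneg (F n x - F m x)]

theorem auCauchy_finsetSum {ι : Type*} (s : Finset ι) {F : ι → ℕ → Ω →ₘ[μ] E}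
    (hF : ∀ i ∈ s, AUCauchy (F i)) : AUCauchy fun n => ∑ i ∈ s, F i n := by
  have hsum : AUCauchy (∑ i ∈ s, F i) :=
    Finset.sum_induction F AUCauchy (fun _ _ h h' => h.add h') (auCauchy_const 0) hF
  simpa only [← Finset.sum_apply] using hsum

-- Markov's inequality and the Borel–Cantelli estimate for the tails.
theorem auCauchy_of_tsum_eLpNorm_ne_top {p : ℝ≥0∞} (hp₀ : p ≠ 0) (hp : p ≠ ∞)
    (hF : ∑' n, eLpNorm (F n) p μ ^ p.toReal ≠ ∞) : AUCauchy F := by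
  refine auCauchy_of_approx fun δ hδ ε hε => ⟨fun _ => 0, auCauchy_const 0, ?_⟩
  set c : ℝ≥0∞ := (ENNReal.ofReal δ)⁻¹ ^ p.toReal
  have hsum : ∑' n, c * eLpNorm (F n) p μ ^ p.toReal ≠ ∞ := by
    rw [ENNReal.tsum_mul_left]
    exact ENNReal.mul_ne_top (by simp [c, hδ]) hF
  obtain ⟨N, hN⟩ :=
    (ENNReal.tendsto_nhds_zero.1 (ENNReal.tendsto_sum_nat_add _ hsum) ε hε).exists
  refine ⟨N, ?_⟩
  calc μ {x | ∃ n ≥ N, δ < ‖(F n - 0) x‖}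
      ≤ μ (⋃ k, {x | ENNReal.ofReal δ ≤ ‖F (k + N) x‖ₑ}) := by
        refine measure_mono ?_
        rintro x ⟨n, hn, hx⟩
        obtain ⟨k, rfl⟩ := Nat.exists_eq_add_of_le' hn
        rw [sub_zero] at hx
        refine mem_iUnion.2 ⟨k, ?_⟩
        rw [mem_ofPred_eq, ← ofReal_norm]
        exact ENNReal.ofReal_le_ofReal hx.le
    _ ≤ ∑' k, c * eLpNorm (F (k + N)) p μ ^ p.toReal :=
        (measure_iUnion_le _).trans <| ENNReal.tsum_le_tsum fun k =>
          meas_ge_le_mul_pow_eLpNorm_enorm μ hp₀ hp (F (k + N)).aestronglyMeasurable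
            (by simpa using hδ) (by simp)
    _ ≤ ε := hN

theorem AUCauchy.ae_cauchySeq (hF : AUCauchy F) : ∀ᵐ x ∂μ, CauchySeq fun n => F n x := by
  have hosc (j : ℕ) : ∀ᵐ x ∂μ, ∃ N, x ∉ oscSet F (1 / (j + 1)) N := by
    rw [ae_iff]
    refine nonpos_iff_eq_zero.1 (_root_.le_of_forall_pos_le_add fun ε hε => ?_)
    obtain ⟨N, hN⟩ := hF (1 / (j + 1)) (by positivity) ε hε
    rw [zero_add]
    refine (measure_mono ?_).trans hN
    exact fun x hx => not_not.1 fun hosc => hx ⟨N, hosc⟩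
  filter_upwards [ae_all_iff.2 hosc] with x hx
  refine Metric.cauchySeq_iff.2 fun ε hε => ?_
  obtain ⟨j, hj⟩ := exists_nat_one_div_lt hε
  obtain ⟨N, hN⟩ := hx j
  exact ⟨N, fun m hm n hn => (dist_eq_norm (F m x) (F n x)).trans_lt
    ((notMem_oscSet.1 hN m hm n hn).trans_lt hj)⟩

theorem AUCauchy.exists_ae_tendsto [CompleteSpace E] (hF : AUCauchy F) :
    ∃ f : Ω →ₘ[μ] E, ∀ᵐ x ∂μ, Tendsto (fun n => F n x) atTop (𝓝 (f x)) := by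
  obtain ⟨f, hfm, hf⟩ := exists_stronglyMeasurable_limit_of_tendsto_ae
    (fun n => (F n).aestronglyMeasurable)
    (hF.ae_cauchySeq.mono fun x hx => cauchySeq_tendsto_of_complete hx)
  refine ⟨AEEqFun.mk f hfm.aestronglyMeasurable, ?_⟩
  filter_upwards [hf, AEEqFun.coeFn_mk f hfm.aestronglyMeasurable] with x hx hmk
  rwa [hmk]

theorem AUCauchy.exists_measure_exists_lt_norm_sub_le {f : Ω →ₘ[μ] E} (hF : AUCauchy F)
    (hf : ∀ᵐ x ∂μ, Tendsto (fun n => F n x) atTop (𝓝 (f x))) {δ : ℝ} (hδ : 0 < δ)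
    {ε : ℝ≥0∞} (hε : 0 < ε) : ∃ N, μ {x | ∃ n ≥ N, δ < ‖F n x - f x‖} ≤ ε := by
  obtain ⟨N, hN⟩ := hF δ hδ ε hε
  refine ⟨N, (measure_mono_ae ?_).trans hN⟩
  filter_upwards [hf] with x hx
  rintro ⟨n, hn, hlt⟩
  by_contra hnot
  exact hlt.not_ge <| le_of_tendsto (tendsto_const_nhds.sub hx).norm <|
    eventually_atTop.2 ⟨N, notMem_oscSet.1 hnot n hn⟩

end AlmostUniformlyCauchy

theorem auTendstoC_of_measure_exists_lt_norm_sub_le {F : ℕ → Ω →ₘ[μ] ℂ} {f : Ω →ₘ[μ] ℂ}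
    (hF : ∀ δ : ℝ, 0 < δ → ∀ ε : ℝ≥0∞, 0 < ε → ∃ N, μ {x | ∃ n ≥ N, δ < ‖F n x - f x‖} ≤ ε) :
    AuTendstoC μ atTop F f := by
  intro ε hε
  obtain ⟨ε', hε'pos, hε'⟩ :=
    ENNReal.exists_pos_sum_of_countable' (ENNReal.ofReal_pos.2 hε).ne' ℕ
  choose N hN using fun j : ℕ => hF (1 / (j + 1)) (by positivity) (ε' j) (hε'pos j)
  set B : Set Ω := ⋃ j, {x | ∃ n ≥ N j, 1 / ((j : ℝ) + 1) < ‖F n x - f x‖}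
  refine ⟨(toMeasurable μ B)ᶜ, (measurableSet_toMeasurable μ B).compl, ?_, ?_⟩
  · rw [compl_compl, measure_toMeasurable]
    exact (measure_iUnion_le _).trans ((ENNReal.tsum_le_tsum hN).trans hε'.le)
  · refine ENNReal.tendsto_nhds_zero.2 fun η hη => ?_
    obtain ⟨j, hj⟩ : ∃ j : ℕ, ENNReal.ofReal (1 / (j + 1)) < η := by
      have hlim := ENNReal.tendsto_ofReal tendsto_one_div_add_atTop_nhds_zero_nat
      rw [ENNReal.ofReal_zero] at hlim
      exact (hlim.eventually_lt_const hη).exists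
    filter_upwards [eventually_ge_atTop (N j)] with n hn
    refine (eLpNormEssSup_le_of_ae_bound ?_).trans hj.le
    filter_upwards [AEEqFun.coeFn_sub (F n) f] with x hx
    rw [norm_indicator_eq_indicator_norm]
    refine indicator_apply_le' (fun hxE => ?_) fun _ => by positivity
    rw [hx]
    exact not_lt.1 fun hlt =>
      hxE (subset_toMeasurable μ B (mem_iUnion.2 ⟨j, n, hn, hlt⟩))

section BanachPrinciple

theorem isClosed_setOf_auCauchy {V E : Type*} [AddCommGroup V] [TopologicalSpace V]
    [ContinuousSub V] [NormedAddCommGroup E] {A : ℕ → V → Ω →ₘ[μ] E}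
    (hA : ∀ n u v, A n (u + v) = A n u + A n v)
    (hmax : ∀ δ : ℝ, 0 < δ → Tendsto (fun v => μ {x | ∃ n, δ < ‖A n v x‖}) (𝓝 0) (𝓝 0)) :
    IsClosed {v | AUCauchy fun n => A n v} := by
  refine isClosed_of_closure_subset fun u hu => auCauchy_of_approx fun δ hδ ε hε => ?_
  have hsub : Tendsto (fun v => u - v) (𝓝 u) (𝓝 0) := by
    simpa using (continuous_const.sub continuous_id).tendsto (x := u) (f := fun v => u - v)
  obtain ⟨v, hv, hle⟩ := ((mem_closure_iff_frequently.1 hu).and_eventually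
    (ENNReal.tendsto_nhds_zero.1 ((hmax δ hδ).comp hsub) ε hε)).exists
  refine ⟨fun n => A n v, hv, 0, (measure_mono ?_).trans hle⟩
  rintro x ⟨n, -, hn⟩
  refine ⟨n, ?_⟩
  rwa [← sub_add_cancel u v, hA, add_sub_cancel_right] at hn

theorem birkhoffAverage_apply_add {𝕜 V : Type*} [DivisionRing 𝕜] [AddCommGroup V] [Module 𝕜 V]
    (U : V →+ V) (n : ℕ) (u v : V) :
    birkhoffAverage 𝕜 U _root_.id n (u + v)
      = birkhoffAverage 𝕜 U _root_.id n u + birkhoffAverage 𝕜 U _root_.id n v := by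
  simp [birkhoffAverage, birkhoffSum, iterate_map_add, Finset.sum_add_distrib, smul_add]

theorem sub_birkhoffAverage_mem_range {𝕜 V : Type*} [Field 𝕜] [CharZero 𝕜] [AddCommGroup V]
    [Module 𝕜 V] (U : V →ₗ[𝕜] V) {n : ℕ} (hn : n ≠ 0) (v : V) :
    v - birkhoffAverage 𝕜 U _root_.id n v ∈ (U - 1).range := by
  have hiter (k : ℕ) : U^[k] v - v ∈ (U - 1).range := by
    induction k with
    | zero => simp
    | succ k ih =>
      rw [Function.iterate_succ_apply', ← sub_add_sub_cancel _ (U^[k] v)]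
      exact add_mem ⟨U^[k] v, rfl⟩ ih
  have heq : birkhoffAverage 𝕜 U _root_.id n v - v
      = (n : 𝕜)⁻¹ • ∑ k ∈ Finset.range n, (U^[k] v - v) := by
    have hn' : (n : 𝕜) ≠ 0 := Nat.cast_ne_zero.2 hn
    rw [Finset.sum_sub_distrib, Finset.sum_const, Finset.card_range, ← Nat.cast_smul_eq_nsmul 𝕜,
      smul_sub, inv_smul_smul₀ hn']
    rfl
  rw [← neg_mem_iff, neg_sub, heq]
  exact Submodule.smul_mem _ _ (sum_mem fun k _ => hiter k)

variable {𝕜 E : Type*} [RCLike 𝕜] [NormedAddCommGroup E] [InnerProductSpace 𝕜 E]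
  {U : Lp E 2 μ →L[𝕜] Lp E 2 μ}

theorem auCauchy_birkhoffAverage_of_isFixedPt {p : Lp E 2 μ} (hp : Function.IsFixedPt U p) :
    AUCauchy fun n => ((birkhoffAverage 𝕜 U _root_.id n p : Lp E 2 μ) : Ω →ₘ[μ] E) := by
  refine (auCauchy_const (p : Ω →ₘ[μ] E)).congr ?_
  filter_upwards [eventually_ne_atTop 0] with n hn
  exact congrArg Subtype.val (hp.birkhoffAverage_eq 𝕜 _root_.id (Nat.cast_ne_zero.2 hn)).symm

theorem auCauchy_birkhoffAverage_of_mem_range (hU : ‖U‖ ≤ 1) {v : Lp E 2 μ}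
    (hv : v ∈ (U.toLinearMap - 1).range) :
    AUCauchy fun n => ((birkhoffAverage 𝕜 U _root_.id n v : Lp E 2 μ) : Ω →ₘ[μ] E) := by
  obtain ⟨u, rfl⟩ := hv
  have hiter (n : ℕ) : ‖U^[n] u‖ ≤ ‖u‖ := by
    induction n with
    | zero => exact le_rfl
    | succ n ih =>
      rw [Function.iterate_succ_apply']
      exact ((U.le_of_opNorm_le hU _).trans_eq (one_mul _)).trans ih
  have hnorm (n : ℕ) : ‖birkhoffAverage 𝕜 U _root_.id n (U u - u)‖ ≤ (n : ℝ)⁻¹ * (2 * ‖u‖) := by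
    have hcob : birkhoffAverage 𝕜 U _root_.id n (U u - u) = (n : 𝕜)⁻¹ • (U^[n] u - u) := by
      refine Eq.trans ?_ (birkhoffAverage_apply_sub_birkhoffAverage U _root_.id n u)
      rw [eq_sub_iff_add_eq]
      exact (birkhoffAverage_apply_add (U : Lp E 2 μ →+ Lp E 2 μ) n _ _).symm.trans
        (congrArg _ (sub_add_cancel _ _))
    rw [hcob, norm_smul, norm_inv, RCLike.norm_natCast]
    gcongr
    exact (norm_sub_le _ _).trans (by linarith [hiter n])
  have hsum : Summable fun n : ℕ => ((n : ℝ)⁻¹ * (2 * ‖u‖)) ^ 2 := by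
    simp only [mul_pow, inv_pow]
    exact (Real.summable_nat_pow_inv.2 one_lt_two).mul_right _
  refine auCauchy_of_tsum_eLpNorm_ne_top two_ne_zero ofNat_ne_top
    (ne_top_of_le_ne_top hsum.tsum_ofReal_ne_top (ENNReal.tsum_le_tsum fun n => ?_))
  rw [← Lp.enorm_def, ← ofReal_norm, ENNReal.toReal_ofNat, ENNReal.rpow_ofNat,
    ← ENNReal.ofReal_pow (norm_nonneg _)]
  exact ENNReal.ofReal_le_ofReal (pow_le_pow_left₀ (norm_nonneg _) (hnorm n) 2)

-- Fixed points and coboundaries span a dense subspace by von Neumann's mean ergodic theorem.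
theorem auCauchy_birkhoffAverage [CompleteSpace E] (hU : ‖U‖ ≤ 1)
    (hmax : ∀ δ : ℝ, 0 < δ → Tendsto (fun v : Lp E 2 μ =>
      μ {x | ∃ n, δ < ‖(birkhoffAverage 𝕜 U _root_.id n v : Lp E 2 μ) x‖}) (𝓝 0) (𝓝 0))
    (v : Lp E 2 μ) :
    AUCauchy fun n => ((birkhoffAverage 𝕜 U _root_.id n v : Lp E 2 μ) : Ω →ₘ[μ] E) := by
  have hadd (n : ℕ) (u v : Lp E 2 μ) :=
    congrArg Subtype.val (birkhoffAverage_apply_add (𝕜 := 𝕜) (U : Lp E 2 μ →+ Lp E 2 μ) n u v)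
  have hclosed := isClosed_setOf_auCauchy
    (A := fun n v => ((birkhoffAverage 𝕜 U _root_.id n v : Lp E 2 μ) : Ω →ₘ[μ] E)) hadd hmax
  set p := (U.eqLocus (1 : Lp E 2 μ →L[𝕜] Lp E 2 μ)).orthogonalProjectionOnto v
  have hlim : Tendsto (fun N => (p : Lp E 2 μ) + (v - birkhoffAverage 𝕜 U _root_.id N v)) atTop
      (𝓝 v) := by
    have hproj := ((U.tendsto_birkhoffAverage_orthogonalProjection hU v).const_sub v).const_add
      (p : Lp E 2 μ)
    rwa [add_sub_cancel] at hproj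
  refine hclosed.mem_of_tendsto hlim ?_
  filter_upwards [eventually_ne_atTop 0] with N hN
  have hfix := auCauchy_birkhoffAverage_of_isFixedPt (U := U) p.2
  have hcob := auCauchy_birkhoffAverage_of_mem_range hU
    (sub_birkhoffAverage_mem_range U.toLinearMap hN v)
  exact (hfix.add hcob).congr (.of_forall fun n => (hadd n _ _).symm)

end BanachPrinciple

section WeightedAverages

variable {T : (Ω →ₘ[μ] ℂ) → (Ω →ₘ[μ] ℂ)} {S : (Ω →ₘ[μ] ℝ) → (Ω →ₘ[μ] ℝ)} {β : ℕ → ℂ}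
  {f : Ω →ₘ[μ] ℂ} {a : ℝ}

namespace IsBesicovitch

theorem exists_pos_bound (hβ : IsBesicovitch β) : ∃ C : ℝ, 0 < C ∧ ∀ k, ‖β k‖ ≤ C := by
  obtain ⟨C, hC⟩ := hβ.1
  exact ⟨max C 1, lt_max_of_lt_right one_pos, fun k => (hC k).trans (le_max_left _ _)⟩

theorem exists_eventually_average_lt (hβ : IsBesicovitch β) {ε : ℝ} (hε : 0 < ε) :
    ∃ (s : ℕ) (z : Fin s → ℂ) (lam : Fin s → ℂ), (∀ j, ‖lam j‖ = 1) ∧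
      ∀ᶠ n : ℕ in atTop,
        (n : ℝ)⁻¹ * ∑ k ∈ Finset.range n, ‖β k - ∑ j, z j * lam j ^ k‖ < ε := by
  obtain ⟨C, -, hC⟩ := hβ.exists_pos_bound
  obtain ⟨s, z, lam, hlam, hlim⟩ := hβ.2 ε hε
  refine ⟨s, z, lam, hlam, eventually_lt_of_limsup_lt hlim ?_⟩
  have hbound (k : ℕ) : ‖β k - ∑ j, z j * lam j ^ k‖ ≤ C + ∑ j, ‖z j‖ := by
    refine (norm_sub_le _ _).trans (add_le_add (hC k) (norm_sum_le_of_le _ fun j _ => ?_))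
    rw [norm_mul, norm_pow, hlam, one_pow, mul_one]
  have hnonneg : 0 ≤ C + ∑ j, ‖z j‖ := (norm_nonneg _).trans (hbound 0)
  refine isBoundedUnder_of ⟨C + ∑ j, ‖z j‖, fun n => ?_⟩
  calc (n : ℝ)⁻¹ * ∑ k ∈ Finset.range n, ‖β k - ∑ j, z j * lam j ^ k‖
      ≤ (n : ℝ)⁻¹ * ∑ _k ∈ Finset.range n, (C + ∑ j, ‖z j‖) := by gcongr; exact hbound _
    _ = (n : ℝ)⁻¹ * n * (C + ∑ j, ‖z j‖) := by
      rw [Finset.sum_const, Finset.card_range, nsmul_eq_mul, mul_assoc]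
    _ ≤ C + ∑ j, ‖z j‖ := mul_le_of_le_one_left hnonneg inv_mul_le_one

end IsBesicovitch

namespace IsDominatedBy

theorem auCauchy_besicovitchAvg_one (hT : IsDominatedBy μ T S) (hS : IsPosDS μ S)
    (hf : MemLp f 2 μ) : AUCauchy fun n => besicovitchAvg μ T (fun _ => 1) n f := by
  have hmax (δ : ℝ) (hδ : 0 < δ) : Tendsto (fun v : Lp ℂ 2 μ =>
      μ {x | ∃ n, δ < ‖(birkhoffAverage ℂ (hT.toL2 hS) _root_.id n v : Lp ℂ 2 μ) x‖})
      (𝓝 0) (𝓝 0) := by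
    have hc : ENNReal.ofReal ((δ / 2) ^ 2) ≠ 0 := by simpa using by positivity
    have hlim : Tendsto (fun v : Lp ℂ 2 μ => ‖v‖ₑ ^ 2 / ENNReal.ofReal ((δ / 2) ^ 2))
        (𝓝 0) (𝓝 0) := by
      have hsq : Tendsto (fun v : Lp ℂ 2 μ => ‖v‖ₑ ^ 2) (𝓝 0) (𝓝 0) :=
        ((ENNReal.continuous_pow 2).comp continuous_enorm).tendsto' _ _ (by simp)
      simpa using ENNReal.Tendsto.div_const hsq (Or.inr hc)
    refine tendsto_of_tendsto_of_tendsto_of_le_of_le tendsto_const_nhds hlim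
      (fun _ => zero_le) fun v => ?_
    have hweak := hT.ofReal_sq_mul_measure_exists_lt_norm_besicovitchAvg_le hS (β := fun _ => 1)
      (C := 1) (by simp) (half_pos hδ) (Lp.memLp v)
    rw [ENNReal.le_div_iff_mul_le (Or.inl hc) (Or.inl ofReal_ne_top), mul_comm, Lp.enorm_def]
    simpa [coe_birkhoffAverage_toL2] using hweak
  have hauc := auCauchy_birkhoffAverage (hT.norm_toL2_le hS) hmax ⟨f, hf.eLpNorm_lt_top⟩
  simpa only [coe_birkhoffAverage_toL2] using hauc

theorem auCauchy_besicovitchAvg_pow (hT : IsDominatedBy μ T S) (hS : IsPosDS μ S)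
    (hf : MemLp f 2 μ) {c : ℂ} (hc : ‖c‖ ≤ 1) :
    AUCauchy fun n => besicovitchAvg μ T (c ^ ·) n f := by
  have hauc := (hT.smul hc).auCauchy_besicovitchAvg_one hS hf
  simpa only [hT.besicovitchAvg_smul_one hS (mem_L1AddLinf_of_memLp one_le_two hf)] using hauc

theorem auCauchy_besicovitchAvg_sum_mul_pow (hT : IsDominatedBy μ T S) (hS : IsPosDS μ S)
    (hf : MemLp f 2 μ) {ι : Type*} (s : Finset ι) (z : ι → ℂ) {lam : ι → ℂ}
    (hlam : ∀ j, ‖lam j‖ ≤ 1) :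
    AUCauchy fun n => besicovitchAvg μ T (fun k => ∑ j ∈ s, z j * lam j ^ k) n f := by
  simp only [besicovitchAvg_sum_mul s z fun j k => lam j ^ k]
  exact auCauchy_finsetSum s fun j _ =>
    (hT.auCauchy_besicovitchAvg_pow hS hf (hlam j)).const_smul (z j)

theorem norm_map_le_const (hT : IsDominatedBy μ T S) (hS : IsPosDS μ S)
    (hfL : f ∈ L1AddLinf ℂ ℂ μ) (ha : 0 ≤ a) (hf : ∀ᵐ x ∂μ, ‖f x‖ ≤ a) : ∀ᵐ x ∂μ, ‖T f x‖ ≤ a := by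
  have htop : eLpNorm (S (normAE f)) ⊤ μ ≤ ENNReal.ofReal a :=
    (hS.norm_top _ (memL1pLinf_iff.2 (normAE_mem_L1AddLinf hfL))).trans
      ((eLpNorm_normAE f ⊤).trans_le (eLpNormEssSup_le_of_ae_bound hf))
  filter_upwards [hT.norm_map_le f hfL, enorm_ae_le_eLpNormEssSup (S (normAE f)) μ] with x hx hess
  refine hx.trans ((ENNReal.ofReal_le_ofReal_iff ha).1 ?_)
  exact (Real.ofReal_le_enorm _).trans (hess.trans htop)

theorem norm_besicovitchAvg_le_average_mul (hT : IsDominatedBy μ T S) (hS : IsPosDS μ S)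
    (hfL : f ∈ L1AddLinf ℂ ℂ μ) (ha : 0 ≤ a) (hf : ∀ᵐ x ∂μ, ‖f x‖ ≤ a) (β : ℕ → ℂ) (n : ℕ) :
    ∀ᵐ x ∂μ, ‖besicovitchAvg μ T β n f x‖
      ≤ (n : ℝ)⁻¹ * (∑ k ∈ Finset.range n, ‖β k‖) * a := by
  have hiter := ae_all_iff.2 fun k =>
    (hT.iterate hS k).norm_map_le_const (hS.iterate k) hfL ha hf
  filter_upwards [_root_.norm_besicovitchAvg_le (T := T) β n f, hiter] with x havg hx
  rw [mul_assoc, Finset.sum_mul]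
  refine havg.trans ?_
  gcongr with k
  exact hx k

theorem auCauchy_besicovitchAvg_of_memLp_two_of_ae_norm_le (hT : IsDominatedBy μ T S)
    (hS : IsPosDS μ S) (hβ : IsBesicovitch β) (hf : MemLp f 2 μ) (ha : 0 < a)
    (hfa : ∀ᵐ x ∂μ, ‖f x‖ ≤ a) : AUCauchy fun n => besicovitchAvg μ T β n f := by
  refine auCauchy_of_approx fun δ hδ ε _ => ?_
  obtain ⟨s, z, lam, hlam, hlt⟩ := hβ.exists_eventually_average_lt (div_pos hδ ha)
  obtain ⟨N, hN⟩ := eventually_atTop.1 hlt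
  set γ : ℕ → ℂ := fun k => ∑ j, z j * lam j ^ k
  refine ⟨_, hT.auCauchy_besicovitchAvg_sum_mul_pow hS hf Finset.univ z fun j => (hlam j).le, N, ?_⟩
  have hsmall : ∀ᵐ x ∂μ, ¬∃ n ≥ N,
      δ < ‖(besicovitchAvg μ T β n f - besicovitchAvg μ T γ n f) x‖ := by
    filter_upwards [ae_all_iff.2 <| hT.norm_besicovitchAvg_le_average_mul hS
      (mem_L1AddLinf_of_memLp one_le_two hf) ha.le hfa (β - γ)] with x hx
    rintro ⟨n, hn, hlt⟩
    rw [besicovitchAvg_sub_left] at hlt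
    exact hlt.not_ge ((hx n).trans ((lt_div_iff₀ ha).1 (hN n hn)).le)
  exact (measure_mono_null (fun x hx => not_not.2 hx) (ae_iff.1 hsmall)).trans_le zero_le

end IsDominatedBy

namespace MemRmuC

theorem integrable_indicator (hf : MemRmuC μ f) (ha : 0 < a) :
    Integrable ({x | a < ‖f x‖}.indicator f) μ := by
  obtain ⟨w, b, hw, -, hw0, hfw⟩ := exists_integrable_norm_le (memL1pLinfC_iff.1 hf.1)
  have hmeas : MeasurableSet {x | a < ‖f x‖} :=
    measurableSet_lt measurable_const f.measurable.norm
  have hdom : Integrable (fun x => w x + {x | a < ‖f x‖}.indicator (fun _ => b) x) μ :=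
    (memLp_one_iff_integrable.1 hw).add
      ((integrable_indicator_iff hmeas).2 (integrableOn_const (hf.2 a ha).ne))
  refine hdom.mono' (f.aestronglyMeasurable.indicator hmeas) ?_
  filter_upwards [hfw, hw0] with x hx hx0
  by_cases hmem : x ∈ {x | a < ‖f x‖}
  · simpa [indicator_of_mem hmem] using hx
  · simpa [indicator_of_notMem hmem] using hx0

theorem exists_memLp_one_norm_sub_le (hf : MemRmuC μ f) (ha : 0 < a) :
    ∃ f₁ : Ω →ₘ[μ] ℂ, MemLp f₁ 1 μ ∧ ∀ᵐ x ∂μ, ‖f x - f₁ x‖ ≤ a := by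
  have hint := hf.integrable_indicator ha
  have hmk := AEEqFun.coeFn_mk _ hint.1
  refine ⟨AEEqFun.mk _ hint.1, (memLp_one_iff_integrable.2 hint).ae_eq hmk.symm, ?_⟩
  filter_upwards [hmk] with x hx
  rw [hx]
  by_cases hmem : x ∈ {x | a < ‖f x‖}
  · simpa [indicator_of_mem hmem] using ha.le
  · simpa [indicator_of_notMem hmem] using hmem

theorem exists_memLp_one_norm_le (hf : MemRmuC μ f) (ha : 0 < a) :
    ∃ w : Ω →ₘ[μ] ℝ, MemLp w 1 μ ∧ ∀ᵐ x ∂μ, ‖f x‖ ≤ w x + a := by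
  obtain ⟨f₁, hf₁, hle⟩ := hf.exists_memLp_one_norm_sub_le ha
  refine ⟨normAE f₁, memLp_normAE_iff.2 hf₁, ?_⟩
  filter_upwards [coeFn_normAE f₁, hle] with x hx hx'
  linarith [norm_le_norm_add_norm_sub (f₁ x) (f x), norm_sub_rev (f x) (f₁ x)]

theorem exists_memLp_two_norm_sub_le (hf : MemRmuC μ f) (ha : 0 < a) {ε : ℝ≥0∞} (hε : ε ≠ 0) :
    ∃ (g : Ω →ₘ[μ] ℂ) (w : Ω →ₘ[μ] ℝ), MemLp g 2 μ ∧ (∃ c, ∀ᵐ x ∂μ, ‖g x‖ ≤ c) ∧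
      MemLp w 1 μ ∧ eLpNorm w 1 μ ≤ ε ∧ ∀ᵐ x ∂μ, ‖(f - g) x‖ ≤ w x + a := by
  obtain ⟨f₁, hf₁, hle⟩ := hf.exists_memLp_one_norm_sub_le ha
  obtain ⟨s, hs, hsL⟩ := hf₁.exists_simpleFunc_eLpNorm_sub_lt one_ne_top hε
  set g : Ω →ₘ[μ] ℂ := AEEqFun.mk s s.aestronglyMeasurable
  have hg : g =ᵐ[μ] s := AEEqFun.coeFn_mk _ _
  have hsub : (f₁ - g : Ω →ₘ[μ] ℂ) =ᵐ[μ] f₁ - s :=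
    (AEEqFun.coeFn_sub f₁ g).trans ((ae_eq_refl f₁).sub hg)
  have hdiff : MemLp (f₁ - g : Ω →ₘ[μ] ℂ) 1 μ := (memLp_congr_ae hsub).2 (hf₁.sub hsL)
  obtain ⟨c, hc⟩ := s.exists_forall_norm_le
  refine ⟨g, normAE (f₁ - g), ?_, ⟨c, hg.mono fun x hx => hx ▸ hc x⟩, memLp_normAE_iff.2 hdiff,
    ?_, ?_⟩
  · rw [memLp_congr_ae hg, SimpleFunc.memLp_iff_integrable two_ne_zero ofNat_ne_top]
    exact memLp_one_iff_integrable.1 hsL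
  · rw [eLpNorm_normAE, eLpNorm_congr_ae hsub]
    exact hs.le
  · filter_upwards [coeFn_normAE (f₁ - g), AEEqFun.coeFn_sub f g, AEEqFun.coeFn_sub f₁ g, hle]
      with x hnorm hfg hf₁g hx
    rw [hnorm, hfg, hf₁g, Pi.sub_apply, Pi.sub_apply]
    linarith [norm_sub_le_norm_sub_add_norm_sub (f x) (f₁ x) (g x)]

end MemRmuC

theorem IsDominatedBy.auCauchy_besicovitchAvg (hT : IsDominatedBy μ T S) (hS : IsPosDS μ S)
    (hβ : IsBesicovitch β) (hf : MemRmuC μ f) : AUCauchy fun n => besicovitchAvg μ T β n f := by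
  refine auCauchy_of_approx fun δ hδ ε hε => ?_
  obtain ⟨C, hC, hβC⟩ := hβ.exists_pos_bound
  set a : ℝ := δ / (2 * C)
  have ha : 0 < a := by positivity
  have hCa : C * (a + a) = δ := by simp only [a]; field_simp; ring
  have ha' : ENNReal.ofReal a ≠ 0 := by simpa using ha
  obtain ⟨g, w, hg, ⟨c, hgc⟩, hw, hwε, hfg⟩ :=
    hf.exists_memLp_two_norm_sub_le ha (mul_ne_zero ha' hε.ne')
  have hgauc := hT.auCauchy_besicovitchAvg_of_memLp_two_of_ae_norm_le hS hβ hg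
    (lt_max_of_lt_right one_pos) (hgc.mono fun x hx => hx.trans (le_max_left c 1))
  refine ⟨_, hgauc, 0, ?_⟩
  have hmax := (hT.ofReal_mul_measure_exists_lt_norm_besicovitchAvg_le hS hβC hw ha.le ha.le
    hfg).trans hwε
  rw [hCa, ENNReal.mul_le_mul_iff_right ha' ofReal_ne_top] at hmax
  simpa only [← hT.besicovitchAvg_sub_right hS (memL1pLinfC_iff.1 hf.1)
    (mem_L1AddLinf_of_memLp one_le_two hg), ge_iff_le, zero_le, true_and] using hmax

end WeightedAverages

section Limit

variable {T : (Ω →ₘ[μ] ℂ) → (Ω →ₘ[μ] ℂ)} {S : (Ω →ₘ[μ] ℝ) → (Ω →ₘ[μ] ℝ)} {β : ℕ → ℂ}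
  {f fhat : Ω →ₘ[μ] ℂ} {w : Ω →ₘ[μ] ℝ} {C a : ℝ}

theorem memRmuC_of_lintegral_ofReal_norm_sub_ne_top
    (hf : ∀ a : ℝ, 0 < a → ∫⁻ x, ENNReal.ofReal (‖f x‖ - a) ∂μ ≠ ∞) : MemRmuC μ f := by
  have hmeas (a : ℝ) : Measurable fun x => ENNReal.ofReal (‖f x‖ - a) :=
    (f.measurable.norm.sub_const a).ennreal_ofReal
  refine ⟨memL1pLinfC_iff.2 ?_, fun l hl => ?_⟩
  · have hint := integrable_toReal_of_lintegral_ne_top (hmeas 1).aemeasurable (hf 1 one_pos)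
    refine mem_L1AddLinf_of_norm_le hint (a := 1) (Eventually.of_forall fun x => ?_)
    rw [toReal_ofReal']
    linarith [le_max_left (‖f x‖ - 1) 0]
  · have hpos : ENNReal.ofReal (l / 2) ≠ 0 := by simpa using hl
    have hcheb := meas_ge_le_lintegral_div (μ := μ) (hmeas (l / 2)).aemeasurable hpos ofReal_ne_top
    refine (measure_mono fun x hx => ?_).trans_lt
      (hcheb.trans_lt (div_lt_top (hf _ (half_pos hl)) hpos))
    have hlt : l < ‖f x‖ := hx
    exact ENNReal.ofReal_le_ofReal (by linarith)

theorem IsPosDS.eLpNorm_one_sum_iterate_le (hS : IsPosDS μ S) (hw : MemLp w 1 μ) (n : ℕ) :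
    eLpNorm (∑ k ∈ Finset.range n, S^[k] w : Ω →ₘ[μ] ℝ) 1 μ ≤ n * eLpNorm w 1 μ := by
  calc
    _ = eLpNorm (∑ k ∈ Finset.range n, ⇑(S^[k] w)) 1 μ :=
      eLpNorm_congr_ae (AEEqFun.coeFn_finsetSum (Finset.range n) fun k => S^[k] w)
    _ ≤ ∑ k ∈ Finset.range n, eLpNorm (S^[k] w) 1 μ :=
      eLpNorm_sum_le (fun k _ => (S^[k] w).aestronglyMeasurable) le_rfl
    _ ≤ ∑ _k ∈ Finset.range n, eLpNorm w 1 μ := Finset.sum_le_sum fun k _ =>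
      (hS.iterate k).norm_one w (memL1pLinf_iff.2 (mem_L1AddLinf_of_memLp le_rfl hw))
    _ = _ := by rw [Finset.sum_const, Finset.card_range, nsmul_eq_mul]

namespace IsDominatedBy

theorem lintegral_ofReal_norm_besicovitchAvg_sub_le (hT : IsDominatedBy μ T S)
    (hS : IsPosDS μ S) (hβ : ∀ k, ‖β k‖ ≤ C) (hw : MemLp w 1 μ) (ha : 0 ≤ a)
    (hf : ∀ᵐ x ∂μ, ‖f x‖ ≤ w x + a) (n : ℕ) :
    ∫⁻ x, ENNReal.ofReal (‖besicovitchAvg μ T β n f x‖ - C * a) ∂μ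
      ≤ ENNReal.ofReal C * eLpNorm w 1 μ := by
  have hC : 0 ≤ C := (norm_nonneg _).trans (hβ 0)
  set W : Ω →ₘ[μ] ℝ := ∑ k ∈ Finset.range n, S^[k] w
  calc
    _ ≤ ∫⁻ x, ENNReal.ofReal (C * (n : ℝ)⁻¹) * ‖W x‖ₑ ∂μ := by
      refine lintegral_mono_ae ?_
      filter_upwards [hT.norm_besicovitchAvg_le hS hβ hw ha hf n] with x hx
      have hle : ‖besicovitchAvg μ T β n f x‖ - C * a ≤ C * (n : ℝ)⁻¹ * W x := by linarith
      refine (ENNReal.ofReal_le_ofReal hle).trans ?_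
      rw [ENNReal.ofReal_mul (by positivity)]
      gcongr
      exact Real.ofReal_le_enorm _
    _ = ENNReal.ofReal (C * (n : ℝ)⁻¹) * eLpNorm W 1 μ := by
      rw [lintegral_const_mul' _ _ ofReal_ne_top, eLpNorm_one_eq_lintegral_enorm]
    _ ≤ ENNReal.ofReal (C * (n : ℝ)⁻¹) * (n * eLpNorm w 1 μ) := by
      gcongr
      exact hS.eLpNorm_one_sum_iterate_le hw n
    _ = ENNReal.ofReal (C * ((n : ℝ)⁻¹ * n)) * eLpNorm w 1 μ := by
      rw [← ENNReal.ofReal_natCast, ← mul_assoc, ← ENNReal.ofReal_mul (by positivity), mul_assoc C]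
    _ ≤ _ := by
      gcongr
      exact mul_le_of_le_one_right hC inv_mul_le_one

theorem memRmuC_of_ae_tendsto_besicovitchAvg (hT : IsDominatedBy μ T S) (hS : IsPosDS μ S)
    (hβ : IsBesicovitch β) (hf : MemRmuC μ f)
    (hlim : ∀ᵐ x ∂μ, Tendsto (fun n => besicovitchAvg μ T β n f x) atTop (𝓝 (fhat x))) :
    MemRmuC μ fhat := by
  obtain ⟨C, hC, hβC⟩ := hβ.exists_pos_bound
  refine memRmuC_of_lintegral_ofReal_norm_sub_ne_top fun a ha => ?_
  obtain ⟨w, hw, hfw⟩ := hf.exists_memLp_one_norm_le (div_pos ha hC)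
  have hbound := hT.lintegral_ofReal_norm_besicovitchAvg_sub_le hS hβC hw (div_pos ha hC).le hfw
  rw [mul_div_cancel₀ a hC.ne'] at hbound
  have hne : ENNReal.ofReal C * eLpNorm w 1 μ ≠ ∞ := mul_ne_top ofReal_ne_top hw.eLpNorm_ne_top
  refine ne_top_of_le_ne_top hne ?_
  calc
    _ = ∫⁻ x, liminf (fun n => ENNReal.ofReal (‖besicovitchAvg μ T β n f x‖ - a)) atTop ∂μ :=
      lintegral_congr_ae <| hlim.mono fun x hx =>
        (ENNReal.tendsto_ofReal (hx.norm.sub_const a)).liminf_eq.symm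
    _ ≤ liminf (fun n => ∫⁻ x, ENNReal.ofReal (‖besicovitchAvg μ T β n f x‖ - a) ∂μ) atTop :=
      lintegral_liminf_le fun n =>
        ((besicovitchAvg μ T β n f).measurable.norm.sub_const a).ennreal_ofReal
    _ ≤ ENNReal.ofReal C * eLpNorm w 1 μ :=
      liminf_le_of_le (by isBoundedDefault) fun b hb => by
        obtain ⟨n, hn⟩ := hb.exists
        exact hn.trans (hbound n)

end IsDominatedBy

end Limit

theorem besicovitch_weighted_au_general {T : (Ω →ₘ[μ] ℂ) → (Ω →ₘ[μ] ℂ)}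
    {S : (Ω →ₘ[μ] ℝ) → (Ω →ₘ[μ] ℝ)} (hT : IsDominatedBy μ T S) (hS : IsPosDS μ S) {β : ℕ → ℂ}
    (hβ : IsBesicovitch β) {f : Ω →ₘ[μ] ℂ} (hf : MemRmuC μ f) :
    ∃ fhat : Ω →ₘ[μ] ℂ, MemRmuC μ fhat ∧
      AuTendstoC μ atTop (fun n => besicovitchAvg μ T β n f) fhat := by
  have hauc : AUCauchy fun n => besicovitchAvg μ T β n f := hT.auCauchy_besicovitchAvg hS hβ hf
  obtain ⟨fhat, hlim⟩ := hauc.exists_ae_tendsto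
  exact ⟨fhat, hT.memRmuC_of_ae_tendsto_besicovitchAvg hS hβ hf hlim,
    auTendstoC_of_measure_exists_lt_norm_sub_le fun _ hδ _ hε =>
      hauc.exists_measure_exists_lt_norm_sub_le hlim hδ hε⟩

/-- **Commutative case of Theorem 4.7**: let `μ` be σ-finite with `L¹(μ)` separable,
let `T` be (the complex-linear extension of) a positive Dunford–Schwartz operator and
`(β_k)` a bounded Besicovitch sequence.  Then for every `f ∈ R_μ` the weighted averages
`B_n(f) = (1/n) ∑_{k<n} β_k T^k f` converge almost uniformly to some `f̂ ∈ R_μ`. -/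
theorem besicovitch_weighted_au (μ : Measure Ω) [SigmaFinite μ]
    [TopologicalSpace.SeparableSpace (Lp ℂ 1 μ)]
    (T : (Ω →ₘ[μ] ℂ) → (Ω →ₘ[μ] ℂ))
    (S : (Ω →ₘ[μ] ℝ) → (Ω →ₘ[μ] ℝ)) (hS : IsPosDS μ S)
    (hTS : ∀ g h : Ω →ₘ[μ] ℝ, MemL1pLinf μ g → MemL1pLinf μ h →
      T (ofRealAE μ g + Complex.I • ofRealAE μ h)
        = ofRealAE μ (S g) + Complex.I • ofRealAE μ (S h))
    (β : ℕ → ℂ) (hβ : IsBesicovitch β)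
    (f : Ω →ₘ[μ] ℂ) (hf : MemRmuC μ f) :
    ∃ fhat : Ω →ₘ[μ] ℂ, MemRmuC μ fhat ∧
      AuTendstoC μ atTop (fun n => besicovitchAvg μ T β n f) fhat :=
  besicovitch_weighted_au_general (hS.isDominatedBy_of_complexAE hTS) hS hβ hf
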